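/- arXiv:2407.12733 — 2 statements merged into one kernel-verified Lean document; each statement's English description precedes it below -/
import Mathlib

section
/- Let u(·,t) be convex in x for each t and solve u_t = Σ arctan λ_i(D²u) − Θ₀ on B̄_{2R+1}(0) × [0,1/n] for some constant Θ₀ ≥ 0 arising as the Lagrangian angle lower bound; suppose the oscillation of u(·,0) on B̄_{2R+1}(0) is M. Then max_{B̄_1(0)×[0,1/n]} |Du| ≤ (1/R)[M + arctan(π/R²)]. -/
/-- The Hessian matrix of a function on Euclidean space, in coordinates. -/
noncomputable def hess {n : ℕ} (u : EuclideanSpace ℝ (Fin n) → ℝ)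
    (x : EuclideanSpace ℝ (Fin n)) : Matrix (Fin n) (Fin n) ℝ :=
  fun i j => iteratedFDeriv ℝ 2 u x ![EuclideanSpace.single i 1, EuclideanSpace.single j 1]

/-!
Convexity makes the angle `Σ arctan λ_i` nonnegative, so `u + Θ₀ t` is nondecreasing in time. In the
other direction, crudely `u + Θ₀ t` grows at most at rate `nπ/2`, and the paraboloid
`c ‖x - x₀‖ ^ 2` with `c R ^ 2 = nTπ/2` absorbs that growth on the sphere of radius `R` about `x₀`.
Where `u - c ‖x - x₀‖ ^ 2` has an interior spatial maximum all eigenvalues are at most `2c`, so the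
parabolic maximum principle improves the growth rate at `x₀` to `n arctan (2c)`. Both height bounds
together control the oscillation of `u(·, t)`, hence its gradient, by convexity.
-/

open Filter Set Metric Topology Matrix

section SecondOrder

variable {E : Type*} [NormedAddCommGroup E] [NormedSpace ℝ E] {f g : E → ℝ} {s : Set E} {x y : E}

lemma deriv_deriv_nonneg_of_isLocalMin {φ : ℝ → ℝ} {a : ℝ} (hφ : ContinuousAt φ a)
    (hmin : IsLocalMin φ a) : 0 ≤ deriv (deriv φ) a := by
  by_contra! hneg
  have hmax : IsLocalMax φ a := isLocalMax_of_deriv_deriv_neg hneg hmin.deriv_eq_zero hφ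
  have hconst : φ =ᶠ[𝓝 a] fun _ => φ a := by
    filter_upwards [hmin, hmax] with b hle hge using le_antisymm hge hle
  have hzero : deriv (deriv φ) a = 0 := by simpa using hconst.deriv.deriv_eq
  exact hneg.ne hzero

lemma deriv_deriv_comp_add_smul (hf : ContDiffAt ℝ 2 f x) (v : E) :
    deriv (deriv fun r : ℝ => f (x + r • v)) 0 = fderiv ℝ (fderiv ℝ f) x v v := by
  have hline (r : ℝ) : HasDerivAt (fun r : ℝ => x + r • v) v r := by
    simpa using ((hasDerivAt_id r).smul_const v).const_add x
  have hline_zero : Tendsto (fun r : ℝ => x + r • v) (𝓝 0) (𝓝 x) := by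
    simpa [ContinuousAt] using (hline 0).continuousAt
  have hfirst : deriv (fun r : ℝ => f (x + r • v)) =ᶠ[𝓝 0] fun r => fderiv ℝ f (x + r • v) v := by
    filter_upwards [hline_zero.eventually (hf.eventually (by simp))] with r hr
    exact ((hr.differentiableAt (by simp)).hasFDerivAt.comp_hasDerivAt r (hline r)).deriv
  have hfderiv : ContDiffAt ℝ 1 (fderiv ℝ f) x := hf.fderiv_right (by norm_num)
  have hf' : HasFDerivAt (fderiv ℝ f) (fderiv ℝ (fderiv ℝ f) x) (x + (0 : ℝ) • v) := by
    simpa using (hfderiv.differentiableAt (by simp)).hasFDerivAt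
  have hf'_line := hf'.comp_hasDerivAt (0 : ℝ) (hline 0)
  have hsecond : HasDerivAt (fun r : ℝ => fderiv ℝ f (x + r • v) v)
      (fderiv ℝ (fderiv ℝ f) x v v) 0 :=
    (hf'_line.clm_apply (hasDerivAt_const (0 : ℝ) v)).congr_deriv (by simp)
  rw [hfirst.deriv_eq, hsecond.deriv]

lemma fderiv_fderiv_nonneg_of_isLocalMin (hf : ContDiffAt ℝ 2 f x) (hmin : IsLocalMin f x)
    (v : E) : 0 ≤ fderiv ℝ (fderiv ℝ f) x v v := by
  have hline : ContinuousAt (fun r : ℝ => x + r • v) 0 := by fun_prop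
  rw [← deriv_deriv_comp_add_smul hf v]
  refine deriv_deriv_nonneg_of_isLocalMin ?_ ?_
  · exact ContinuousAt.comp (g := f) (by simpa using hf.continuousAt) hline
  · exact IsLocalMin.comp_continuous (f := f) (by simpa using hmin) hline

lemma fderiv_fderiv_sub (hf : ContDiffAt ℝ 2 f x) (hg : ContDiffAt ℝ 2 g x) :
    fderiv ℝ (fderiv ℝ fun y => f y - g y) x
      = fderiv ℝ (fderiv ℝ f) x - fderiv ℝ (fderiv ℝ g) x := by
  have hfirst : fderiv ℝ (fun y => f y - g y) =ᶠ[𝓝 x] fun y => fderiv ℝ f y - fderiv ℝ g y := by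
    filter_upwards [hf.eventually (by simp), hg.eventually (by simp)] with y hfy hgy
    exact fderiv_fun_sub (hfy.differentiableAt (by simp)) (hgy.differentiableAt (by simp))
  rw [hfirst.fderiv_eq]
  exact fderiv_fun_sub
    ((hf.fderiv_right (m := 1) (by norm_num)).differentiableAt (by simp))
    ((hg.fderiv_right (m := 1) (by norm_num)).differentiableAt (by simp))

lemma fderiv_fderiv_le_of_isLocalMax_sub (hf : ContDiffAt ℝ 2 f x) (hg : ContDiffAt ℝ 2 g x)
    (hmax : IsLocalMax (fun y => f y - g y) x) (v : E) :
    fderiv ℝ (fderiv ℝ f) x v v ≤ fderiv ℝ (fderiv ℝ g) x v v := by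
  have hmin : IsLocalMin (fun y => g y - f y) x := by simpa using hmax.neg
  have hnonneg := fderiv_fderiv_nonneg_of_isLocalMin (hg.sub hf) hmin v
  simpa [fderiv_fderiv_sub hg hf] using hnonneg

lemma fderiv_sub_le_of_convexOn (hf : ConvexOn ℝ s f) (hx : x ∈ s) (hy : y ∈ s)
    (hdiff : DifferentiableAt ℝ f x) : fderiv ℝ f x (y - x) ≤ f y - f x := by
  have hderiv : HasDerivAt (f ∘ AffineMap.lineMap (k := ℝ) x y) (fderiv ℝ f x (y - x)) 0 :=
    HasFDerivAt.comp_hasDerivAt (0 : ℝ) (by simpa using hdiff.hasFDerivAt)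
      AffineMap.hasDerivAt_lineMap
  simpa [slope_def_field] using (hf.comp_affineMap (AffineMap.lineMap x y)).le_slope_of_hasDerivAt
    (x := 0) (y := 1) (by simpa using hx) (by simpa using hy) one_pos hderiv

lemma fderiv_fderiv_nonneg_of_convexOn (hf : ConvexOn ℝ s f) (hs : s ∈ 𝓝 x)
    (hdiff : ContDiffAt ℝ 2 f x) (v : E) : 0 ≤ fderiv ℝ (fderiv ℝ f) x v v := by
  have htangent : IsLocalMax (fun y => fderiv ℝ f x y - f y) x := by
    filter_upwards [hs] with y hy
    have := fderiv_sub_le_of_convexOn hf (mem_of_mem_nhds hs) hy (hdiff.differentiableAt (by simp))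
    rw [map_sub] at this
    linarith
  have hfderiv : fderiv ℝ (fderiv ℝ (fderiv ℝ f x)) x = 0 := by
    rw [funext fun y => (fderiv ℝ f x).fderiv (x := y)]
    simp
  simpa [hfderiv] using
    fderiv_fderiv_le_of_isLocalMax_sub (fderiv ℝ f x).contDiff.contDiffAt hdiff htangent v

lemma norm_fderiv_le_of_convexOn {R C : ℝ} (hR : 0 < R) (hf : ConvexOn ℝ s f)
    (hs : closedBall x R ⊆ s) (hdiff : DifferentiableAt ℝ f x)
    (hC : ∀ y ∈ closedBall x R, f y - f x ≤ C) : ‖fderiv ℝ f x‖ ≤ C / R := by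
  have hx : x ∈ closedBall x R := mem_closedBall_self hR.le
  have hC0 : 0 ≤ C := by simpa using hC x hx
  have hupper (v : E) (hv : ‖v‖ = 1) : fderiv ℝ f x v ≤ C / R := by
    have hy : x + R • v ∈ closedBall x R := by
      simp [norm_smul, hv, abs_of_pos hR]
    have := (fderiv_sub_le_of_convexOn hf (hs hx) (hs hy) hdiff).trans (hC _ hy)
    rw [add_sub_cancel_left, map_smul, smul_eq_mul] at this
    rwa [le_div_iff₀' hR]
  refine ContinuousLinearMap.opNorm_le_of_unit_norm (by positivity) fun v hv => abs_le'.2 ?_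
  exact ⟨hupper v hv, by simpa using hupper (-v) (by simpa using hv)⟩

end SecondOrder

section MaximumPrinciple

lemma deriv_nonneg_of_isMaxOn_Icc {φ : ℝ → ℝ} {a b : ℝ} (hab : a < b)
    (hmax : IsMaxOn φ (Icc a b) b) : 0 ≤ deriv φ b := by
  by_cases hφ : DifferentiableAt ℝ φ b
  · have hcone : a - b ∈ posTangentConeAt (Icc a b) b :=
      sub_mem_posTangentConeAt_of_segment_subset
        ((convex_Icc a b).segment_subset (right_mem_Icc.2 hab.le) (left_mem_Icc.2 hab.le))
    have hle := hmax.localize.hasFDerivWithinAt_nonpos hφ.hasDerivAt.hasFDerivAt.hasFDerivWithinAt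
      hcone
    simp only [ContinuousLinearMap.toSpanSingleton_apply, smul_eq_mul] at hle
    exact nonneg_of_mul_nonpos_right hle (sub_neg.2 hab)
  · rw [deriv_zero_of_not_differentiableAt hφ]

variable {X : Type*} [TopologicalSpace X] {K : Set X} {w : X → ℝ → ℝ} {T C : ℝ}

lemma le_of_deriv_neg_of_isLocalMax (hK : IsCompact K)
    (hw : ContinuousOn (fun p : X × ℝ => w p.1 p.2) (K ×ˢ Icc 0 T))
    (hderiv : ∀ x ∈ interior K, ∀ t ∈ Ioc 0 T, IsLocalMax (fun y => w y t) x → deriv (w x) t < 0)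
    (hinit : ∀ x ∈ K, w x 0 ≤ C) (hbdry : ∀ x ∈ frontier K, ∀ t ∈ Icc 0 T, w x t ≤ C)
    {x : X} (hx : x ∈ K) {t : ℝ} (ht : t ∈ Icc 0 T) : w x t ≤ C := by
  obtain ⟨⟨y, τ⟩, ⟨hy, hτ⟩, hmax⟩ :=
    (hK.prod isCompact_Icc).exists_isMaxOn ⟨(x, t), hx, ht⟩ hw
  suffices hyτ : w y τ ≤ C from (hmax (mk_mem_prod hx ht)).trans hyτ
  by_cases hint : y ∈ interior K
  · obtain hτ0 | hτ0 := hτ.1.eq_or_lt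
    · obtain rfl : 0 = τ := hτ0
      exact hinit y hy
    · have hspace : IsLocalMax (fun z => w z τ) y := by
        filter_upwards [mem_interior_iff_mem_nhds.1 hint] with z hz using hmax (mk_mem_prod hz hτ)
      have htime : IsMaxOn (w y) (Icc 0 τ) τ :=
        fun s hs => hmax (mk_mem_prod hy (Icc_subset_Icc_right hτ.2 hs))
      exact absurd (deriv_nonneg_of_isMaxOn_Icc hτ0 htime)
        (hderiv y hint τ ⟨hτ0, hτ.2⟩ hspace).not_ge
  · exact hbdry y ⟨subset_closure hy, hint⟩ τ hτ

lemma le_of_deriv_nonpos_of_isLocalMax_of_mem_Ioo (hK : IsCompact K)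
    (hw : ContinuousOn (fun p : X × ℝ => w p.1 p.2) (K ×ˢ Icc 0 T))
    (hdiff : ∀ x ∈ interior K, ∀ t ∈ Ioo 0 T, DifferentiableAt ℝ (w x) t)
    (hderiv : ∀ x ∈ interior K, ∀ t ∈ Ioo 0 T, IsLocalMax (fun y => w y t) x → deriv (w x) t ≤ 0)
    (hinit : ∀ x ∈ K, w x 0 ≤ C) (hbdry : ∀ x ∈ frontier K, ∀ t ∈ Icc 0 T, w x t ≤ C)
    {x : X} (hx : x ∈ K) {t : ℝ} (ht : t ∈ Ioo 0 T) : w x t ≤ C := by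
  suffices hpert : ∀ ε > 0, w x t - ε * t ≤ C by
    refine le_of_forall_pos_le_add fun ε hε => ?_
    have := hpert (ε / t) (div_pos hε ht.1)
    rw [div_mul_cancel₀ _ ht.1.ne'] at this
    linarith
  intro ε hε
  have hsub : Icc 0 t ⊆ Icc 0 T := Icc_subset_Icc_right ht.2.le
  refine le_of_deriv_neg_of_isLocalMax (w := fun x t => w x t - ε * t) (T := t) hK
    ((hw.mono (prod_mono_right hsub)).sub (by fun_prop)) (fun y hy s hs hmax => ?_)
    (by simpa using hinit) (fun y hy s hs => ?_) hx (right_mem_Icc.2 ht.1.le)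
  · have hs' : s ∈ Ioo 0 T := ⟨hs.1, hs.2.trans_lt ht.2⟩
    have hmax' : IsLocalMax (fun z => w z s) y := by
      filter_upwards [hmax] with z hz using (sub_le_sub_iff_right _).1 hz
    have hw' : HasDerivAt (fun r => w y r - ε * r) (deriv (w y) s - ε) s := by
      simpa using (hdiff y hy s hs').hasDerivAt.fun_sub ((hasDerivAt_id s).const_mul ε)
    rw [hw'.deriv]
    linarith [hderiv y hy s hs' hmax']
  · have := hbdry y hy s (hsub hs)
    linarith [mul_nonneg hε.le hs.1]

theorem le_of_deriv_nonpos_of_isLocalMax (hK : IsCompact K)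
    (hw : ContinuousOn (fun p : X × ℝ => w p.1 p.2) (K ×ˢ Icc 0 T))
    (hdiff : ∀ x ∈ interior K, ∀ t ∈ Ioo 0 T, DifferentiableAt ℝ (w x) t)
    (hderiv : ∀ x ∈ interior K, ∀ t ∈ Ioo 0 T, IsLocalMax (fun y => w y t) x → deriv (w x) t ≤ 0)
    (hinit : ∀ x ∈ K, w x 0 ≤ C) (hbdry : ∀ x ∈ frontier K, ∀ t ∈ Icc 0 T, w x t ≤ C)
    {x : X} (hx : x ∈ K) {t : ℝ} (ht : t ∈ Icc 0 T) : w x t ≤ C := by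
  obtain rfl | hT := (ht.1.trans ht.2).eq_or_lt
  · obtain rfl : t = 0 := le_antisymm ht.2 ht.1
    exact hinit x hx
  · have hclosure : closure (Ioo 0 T) = Icc 0 T := closure_Ioo hT.ne
    have hcont : ContinuousOn (w x) (Icc 0 T) :=
      hw.comp (f := fun s => (x, s)) (by fun_prop) fun s hs => mk_mem_prod hx hs
    exact le_on_closure (fun s hs => le_of_deriv_nonpos_of_isLocalMax_of_mem_Ioo hK hw hdiff hderiv
      hinit hbdry hx hs) (hclosure ▸ hcont) continuousOn_const (hclosure ▸ ht)

end MaximumPrinciple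

section LagrangianAngle

variable {n : ℕ}

/-- The Lagrangian angle `Σ arctan λ_i` of a symmetric matrix with eigenvalues `λ_i`. For the
Hessian of a potential it is the phase of the associated gradient graph. -/
noncomputable def lagrangianAngle {A : Matrix (Fin n) (Fin n) ℝ} (hA : A.IsHermitian) : ℝ :=
  ∑ i, Real.arctan (hA.eigenvalues i)

lemma lagrangianAngle_nonneg {A : Matrix (Fin n) (Fin n) ℝ} (hA : A.IsHermitian)
    (h : ∀ i, 0 ≤ hA.eigenvalues i) : 0 ≤ lagrangianAngle hA :=
  Finset.sum_nonneg fun i _ => Real.arctan_nonneg.2 (h i)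

lemma lagrangianAngle_le_mul_pi_div_two {A : Matrix (Fin n) (Fin n) ℝ} (hA : A.IsHermitian) :
    lagrangianAngle hA ≤ n * (Real.pi / 2) := by
  simpa [lagrangianAngle] using Finset.sum_le_card_nsmul Finset.univ
    (fun i => Real.arctan (hA.eigenvalues i)) _ fun i _ => (Real.arctan_lt_pi_div_two _).le

lemma lagrangianAngle_le_mul_arctan {A : Matrix (Fin n) (Fin n) ℝ} (hA : A.IsHermitian) {c : ℝ}
    (h : ∀ i, hA.eigenvalues i ≤ c) : lagrangianAngle hA ≤ n * Real.arctan c := by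
  simpa [lagrangianAngle] using
    Finset.sum_le_card_nsmul Finset.univ _ _ fun i _ => Real.arctan_mono (h i)

end LagrangianAngle

section Hessian

variable {n : ℕ} {f : EuclideanSpace ℝ (Fin n) → ℝ} {x : EuclideanSpace ℝ (Fin n)}

lemma hess_isHermitian (hf : ContDiffAt ℝ 2 f x) : (hess f x).IsHermitian := by
  ext i j
  simpa [hess, iteratedFDeriv_two_apply] using (hf.isSymmSndFDerivAt (by simp)).eq _ _

lemma dotProduct_hess_mulVec (f : EuclideanSpace ℝ (Fin n) → ℝ) (x v : EuclideanSpace ℝ (Fin n)) :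
    v.ofLp ⬝ᵥ hess f x *ᵥ v.ofLp = fderiv ℝ (fderiv ℝ f) x v v := by
  conv_rhs => rw [← (EuclideanSpace.basisFun (Fin n) ℝ).sum_repr v]
  simp only [dotProduct, mulVec, hess, iteratedFDeriv_two_apply, map_sum, map_smul,
    FunLike.coe_sum, Finset.sum_apply, FunLike.coe_smul, Pi.smul_apply, smul_eq_mul,
    EuclideanSpace.basisFun_repr, EuclideanSpace.basisFun_apply, Matrix.cons_val_zero,
    Matrix.cons_val_one, Finset.mul_sum]
  rw [Finset.sum_comm]
  exact Finset.sum_congr rfl fun i _ => Finset.sum_congr rfl fun j _ => by ring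

lemma eigenvalues_hess_eq (h : (hess f x).IsHermitian) (i : Fin n) :
    h.eigenvalues i
      = fderiv ℝ (fderiv ℝ f) x (h.eigenvectorBasis i) (h.eigenvectorBasis i) := by
  rw [h.eigenvalues_eq, star_trivial, dotProduct_hess_mulVec, RCLike.re_to_real]

lemma eigenvalues_hess_nonneg_of_convexOn {s : Set (EuclideanSpace ℝ (Fin n))}
    (hf : ConvexOn ℝ s f) (hs : s ∈ 𝓝 x) (hdiff : ContDiffAt ℝ 2 f x)
    (h : (hess f x).IsHermitian) (i : Fin n) : 0 ≤ h.eigenvalues i := by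
  rw [eigenvalues_hess_eq]
  exact fderiv_fderiv_nonneg_of_convexOn hf hs hdiff _

lemma fderiv_fderiv_const_mul_norm_sub_sq {E : Type*} [NormedAddCommGroup E]
    [InnerProductSpace ℝ E] (c : ℝ) (x₀ x v : E) :
    fderiv ℝ (fderiv ℝ fun y : E => c * ‖y - x₀‖ ^ 2) x v v = 2 * c * ‖v‖ ^ 2 := by
  have hfirst : (fderiv ℝ fun y : E => c * ‖y - x₀‖ ^ 2)
      = fun y => (c • (2 : ℝ) • innerSL ℝ (E := E)) (y - x₀) := by
    ext y v
    have hy : HasFDerivAt (fun y => y - x₀) (ContinuousLinearMap.id ℝ E) y :=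
      (hasFDerivAt_id y).sub_const x₀
    rw [(hy.norm_sq.const_mul c).fderiv]
    simp [two_mul]
  rw [hfirst, fderiv_comp_sub, ContinuousLinearMap.fderiv]
  change c * (2 * inner ℝ v v) = 2 * c * ‖v‖ ^ 2
  rw [real_inner_self_eq_norm_sq]
  ring

lemma eigenvalues_hess_le_of_isLocalMax {c : ℝ} {x₀ : EuclideanSpace ℝ (Fin n)}
    (hf : ContDiffAt ℝ 2 f x) (hmax : IsLocalMax (fun y => f y - c * ‖y - x₀‖ ^ 2) x)
    (h : (hess f x).IsHermitian) (i : Fin n) : h.eigenvalues i ≤ 2 * c := by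
  have hparaboloid : ContDiffAt ℝ 2 (fun y => c * ‖y - x₀‖ ^ 2) x :=
    contDiffAt_const.mul ((contDiffAt_id.sub contDiffAt_const).norm_sq ℝ)
  have hle := fderiv_fderiv_le_of_isLocalMax_sub hf hparaboloid hmax (h.eigenvectorBasis i)
  rwa [fderiv_fderiv_const_mul_norm_sub_sq, h.eigenvectorBasis.norm_eq_one, one_pow, mul_one,
    ← eigenvalues_hess_eq] at hle

lemma lagrangianAngle_hess_le_of_isLocalMax {c : ℝ} {x₀ : EuclideanSpace ℝ (Fin n)}
    (hf : ContDiffAt ℝ 2 f x) (hmax : IsLocalMax (fun y => f y - c * ‖y - x₀‖ ^ 2) x)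
    (h : (hess f x).IsHermitian) : lagrangianAngle h ≤ n * Real.arctan (2 * c) :=
  lagrangianAngle_le_mul_arctan h (eigenvalues_hess_le_of_isLocalMax hf hmax h)

end Hessian

/-- Spatially convex solutions of `u_t = Σ arctan λ_i(D²u) - Θ₀` on `B̄_ρ(a) × [0, T]`. The solution
is continuous up to the boundary; the equation is imposed at interior points, where `u` is `C²` in
space and differentiable in time. Quantifying over all proofs that the Hessian is symmetric is
harmless, because it is symmetric at every point where `u` is `C²` in space. -/
structure IsConvexAngleFlow {n : ℕ} (u : EuclideanSpace ℝ (Fin n) → ℝ → ℝ)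
    (a : EuclideanSpace ℝ (Fin n)) (ρ T Θ₀ : ℝ) : Prop where
  continuousOn : ContinuousOn (fun p : EuclideanSpace ℝ (Fin n) × ℝ => u p.1 p.2)
    (closedBall a ρ ×ˢ Icc 0 T)
  contDiffAt_space : ∀ x ∈ ball a ρ, ∀ t ∈ Icc 0 T, ContDiffAt ℝ 2 (fun y => u y t) x
  differentiableAt_time : ∀ x ∈ ball a ρ, ∀ t ∈ Ioo 0 T, DifferentiableAt ℝ (u x) t
  convexOn : ∀ t ∈ Icc 0 T, ConvexOn ℝ (ball a ρ) fun y => u y t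
  deriv_eq : ∀ x ∈ ball a ρ, ∀ t ∈ Ioo 0 T, ∀ h : (hess (fun y => u y t) x).IsHermitian,
    deriv (u x) t = lagrangianAngle h - Θ₀

namespace IsConvexAngleFlow

variable {n : ℕ} {u : EuclideanSpace ℝ (Fin n) → ℝ → ℝ} {a b x : EuclideanSpace ℝ (Fin n)}
  {ρ r R T Θ₀ t : ℝ}

lemma of_contDiffOn (hu : ContDiffOn ℝ 2 (fun p : EuclideanSpace ℝ (Fin n) × ℝ => u p.1 p.2)
      (closedBall a ρ ×ˢ Icc 0 T))
    (hconv : ∀ t ∈ Icc 0 T, ConvexOn ℝ (ball a ρ) fun y => u y t)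
    (hderiv : ∀ x ∈ ball a ρ, ∀ t ∈ Ioo 0 T, ∀ h : (hess (fun y => u y t) x).IsHermitian,
      deriv (u x) t = lagrangianAngle h - Θ₀) :
    IsConvexAngleFlow u a ρ T Θ₀ where
  continuousOn := hu.continuousOn
  contDiffAt_space x hx t ht :=
    have hspace : ContDiffOn ℝ 2 (fun y => u y t) (closedBall a ρ) :=
      hu.comp (f := fun y => (y, t)) (by fun_prop) fun _ hy => mk_mem_prod hy ht
    hspace.contDiffAt (closedBall_mem_nhds_of_mem hx)
  differentiableAt_time x hx t ht :=
    have htime : ContDiffOn ℝ 2 (u x) (Icc 0 T) :=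
      hu.comp (f := fun s => (x, s)) (by fun_prop) fun _ hs =>
        mk_mem_prod (ball_subset_closedBall hx) hs
    (htime.contDiffAt (Icc_mem_nhds ht.1 ht.2)).differentiableAt (by simp)
  convexOn := hconv
  deriv_eq := hderiv

lemma restrict (hu : IsConvexAngleFlow u a ρ T Θ₀) (h : r + dist b a ≤ ρ) :
    IsConvexAngleFlow u b r T Θ₀ where
  continuousOn := hu.continuousOn.mono (prod_mono_left (closedBall_subset_closedBall' h))
  contDiffAt_space x hx := hu.contDiffAt_space x (ball_subset_ball' h hx)
  differentiableAt_time x hx := hu.differentiableAt_time x (ball_subset_ball' h hx)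
  convexOn t ht := (hu.convexOn t ht).subset (ball_subset_ball' h) (convex_ball b r)
  deriv_eq x hx := hu.deriv_eq x (ball_subset_ball' h hx)

lemma hasDerivAt_add_mul (hu : IsConvexAngleFlow u a ρ T Θ₀) (hx : x ∈ ball a ρ)
    (ht : t ∈ Ioo 0 T) (h : (hess (fun y => u y t) x).IsHermitian) (k : ℝ) :
    HasDerivAt (fun s => u x s + k * s) (lagrangianAngle h - Θ₀ + k) t := by
  rw [← hu.deriv_eq x hx t ht h]
  simpa using
    (hu.differentiableAt_time x hx t ht).hasDerivAt.fun_add ((hasDerivAt_id t).const_mul k)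

lemma continuousOn_add_mul (hu : IsConvexAngleFlow u a ρ T Θ₀) (hx : x ∈ closedBall a ρ)
    (k : ℝ) : ContinuousOn (fun t => u x t + k * t) (Icc 0 T) :=
  (hu.continuousOn.comp (f := fun t => (x, t)) (by fun_prop) fun _ ht => mk_mem_prod hx ht).add
    (by fun_prop)

lemma isHermitian (hu : IsConvexAngleFlow u a ρ T Θ₀) (hx : x ∈ ball a ρ) (ht : t ∈ Icc 0 T) :
    (hess (fun y => u y t) x).IsHermitian :=
  hess_isHermitian (hu.contDiffAt_space x hx t ht)

lemma monotoneOn_add_mul (hu : IsConvexAngleFlow u a ρ T Θ₀) (hx : x ∈ ball a ρ) :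
    MonotoneOn (fun t => u x t + Θ₀ * t) (Icc 0 T) := by
  have hderiv (t : ℝ) (ht : t ∈ Ioo 0 T) :=
    hu.hasDerivAt_add_mul hx ht (hu.isHermitian hx (Ioo_subset_Icc_self ht)) Θ₀
  refine monotoneOn_of_deriv_nonneg (convex_Icc 0 T)
    (hu.continuousOn_add_mul (ball_subset_closedBall hx) Θ₀) ?_ ?_ <;> rw [interior_Icc]
  · exact fun t ht => (hderiv t ht).differentiableAt.differentiableWithinAt
  · intro t ht
    have ht' := Ioo_subset_Icc_self ht
    rw [(hderiv t ht).deriv, sub_add_cancel]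
    exact lagrangianAngle_nonneg _ (eigenvalues_hess_nonneg_of_convexOn (hu.convexOn t ht')
      (isOpen_ball.mem_nhds hx) (hu.contDiffAt_space x hx t ht') _)

lemma antitoneOn_add_mul (hu : IsConvexAngleFlow u a ρ T Θ₀) (hx : x ∈ ball a ρ) :
    AntitoneOn (fun t => u x t + (Θ₀ - n * (Real.pi / 2)) * t) (Icc 0 T) := by
  have hderiv (t : ℝ) (ht : t ∈ Ioo 0 T) := hu.hasDerivAt_add_mul hx ht
    (hu.isHermitian hx (Ioo_subset_Icc_self ht)) (Θ₀ - n * (Real.pi / 2))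
  refine antitoneOn_of_deriv_nonpos (convex_Icc 0 T)
    (hu.continuousOn_add_mul (ball_subset_closedBall hx) _) ?_ ?_ <;> rw [interior_Icc]
  · exact fun t ht => (hderiv t ht).differentiableAt.differentiableWithinAt
  · intro t ht
    rw [(hderiv t ht).deriv]
    linarith [lagrangianAngle_le_mul_pi_div_two (hu.isHermitian hx (Ioo_subset_Icc_self ht))]

lemma add_mul_le_add_mul_pi_div_two (hu : IsConvexAngleFlow u a ρ T Θ₀) (hρ : ρ ≠ 0)
    (hx : x ∈ closedBall a ρ) (ht : t ∈ Icc 0 T) :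
    u x t + Θ₀ * t ≤ u x 0 + n * (Real.pi / 2) * t := by
  have hslice (s : ℝ) (hs : s ∈ Icc 0 T) : ContinuousOn (fun y => u y s) (closedBall a ρ) :=
    hu.continuousOn.comp (f := fun y => (y, s)) (by fun_prop) fun _ hy => mk_mem_prod hy hs
  have h0 : (0 : ℝ) ∈ Icc 0 T := left_mem_Icc.2 (ht.1.trans ht.2)
  rw [← closure_ball a hρ] at hslice hx
  refine le_on_closure (f := fun y => u y t + Θ₀ * t)
    (g := fun y => u y 0 + n * (Real.pi / 2) * t) (fun y hy => ?_)
    ((hslice t ht).add continuousOn_const) ((hslice 0 h0).add continuousOn_const) hx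
  have := hu.antitoneOn_add_mul hy h0 ht ht.1
  simp only [mul_zero, add_zero] at this
  linarith

lemma deriv_sub_paraboloid_nonpos_of_isLocalMax (hu : IsConvexAngleFlow u a ρ T Θ₀)
    (hx : x ∈ ball a ρ) (ht : t ∈ Ioo 0 T) {c : ℝ}
    (hmax : IsLocalMax
      (fun y => u y t + (Θ₀ - n * Real.arctan (2 * c)) * t - c * ‖y - b‖ ^ 2) x) :
    deriv (fun s => u x s + (Θ₀ - n * Real.arctan (2 * c)) * s - c * ‖x - b‖ ^ 2) t ≤ 0 := by
  have ht' := Ioo_subset_Icc_self ht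
  have hsymm := hu.isHermitian hx ht'
  have hmax' : IsLocalMax (fun y => u y t - c * ‖y - b‖ ^ 2) x := by
    filter_upwards [hmax] with y hy
    linarith
  rw [((hu.hasDerivAt_add_mul hx ht hsymm _).sub_const _).deriv]
  linarith [lagrangianAngle_hess_le_of_isLocalMax (hu.contDiffAt_space x hx t ht') hmax' hsymm]

lemma center_add_mul_le (hu : IsConvexAngleFlow u a R T Θ₀) (hR : 0 < R) {m : ℝ}
    (hm : ∀ x ∈ closedBall a R, u x 0 ≤ m) (ht : t ∈ Icc 0 T) :
    u a t + Θ₀ * t ≤ m + n * t * Real.arctan (n * T * Real.pi / R ^ 2) := by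
  have hT : 0 ≤ T := ht.1.trans ht.2
  set c := n * T * Real.pi / (2 * R ^ 2) with hc
  have hc0 : 0 ≤ c := by positivity
  have h2c : n * T * Real.pi / R ^ 2 = 2 * c := by rw [hc]; field_simp
  rw [h2c]
  set A := Real.arctan (2 * c)
  have hA : 0 ≤ A := Real.arctan_nonneg.2 (by positivity)
  suffices hbarrier : u a t + (Θ₀ - n * A) * t - c * ‖a - a‖ ^ 2 ≤ m by
    simp only [sub_self, norm_zero] at hbarrier
    linarith
  refine le_of_deriv_nonpos_of_isLocalMax (isCompact_closedBall a R)
    (w := fun x t => u x t + (Θ₀ - n * A) * t - c * ‖x - a‖ ^ 2)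
    ((hu.continuousOn.add (by fun_prop)).sub (by fun_prop)) ?_ ?_ (fun x hx => ?_) ?_
    (mem_closedBall_self hR.le) ht
  · rw [interior_closedBall a hR.ne']
    exact fun x hx s hs => ((hu.hasDerivAt_add_mul hx hs
      (hu.isHermitian hx (Ioo_subset_Icc_self hs)) _).sub_const _).differentiableAt
  · rw [interior_closedBall a hR.ne']
    exact fun x hx s hs => hu.deriv_sub_paraboloid_nonpos_of_isLocalMax hx hs
  · linarith [hm x hx, mul_nonneg hc0 (sq_nonneg ‖x - a‖)]
  · rw [frontier_closedBall a hR.ne']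
    intro x hx s hs
    have hx' := sphere_subset_closedBall hx
    have hcR : c * ‖x - a‖ ^ 2 = n * (Real.pi / 2) * T := by
      rw [mem_sphere_iff_norm.1 hx, hc]
      field_simp
    have hgrowth : n * (Real.pi / 2) * s ≤ n * (Real.pi / 2) * T := by gcongr; exact hs.2
    have hAs : 0 ≤ n * A * s := mul_nonneg (mul_nonneg n.cast_nonneg hA) hs.1
    linarith [hu.add_mul_le_add_mul_pi_div_two hR.ne' hx' hs, hm x hx']

end IsConvexAngleFlow

theorem stmt7_general {n : ℕ} {u : EuclideanSpace ℝ (Fin n) → ℝ → ℝ}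
    {x : EuclideanSpace ℝ (Fin n)} {R T Θ₀ M t : ℝ} (hR : 0 < R)
    (hu : IsConvexAngleFlow u x (2 * R) T Θ₀)
    (hM : ∀ y ∈ closedBall x (2 * R), u y 0 - u x 0 ≤ M) (ht : t ∈ Icc 0 T) :
    ‖gradient (fun y => u y t) x‖
      ≤ (1 / R) * (M + n * T * Real.arctan (n * T * Real.pi / R ^ 2)) := by
  have hT : 0 ≤ T := ht.1.trans ht.2
  have hx : x ∈ ball x (2 * R) := mem_ball_self (by positivity)
  rw [gradient, LinearIsometryEquiv.norm_map, one_div_mul_eq_div]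
  refine norm_fderiv_le_of_convexOn hR (hu.convexOn t ht) (closedBall_subset_ball (by linarith))
    ((hu.contDiffAt_space x hx t ht).differentiableAt (by simp)) fun y hy => ?_
  have hball : R + dist y x ≤ 2 * R := by linarith [mem_closedBall.1 hy]
  have hupper := (hu.restrict hball).center_add_mul_le hR (m := u x 0 + M)
    (fun z hz => by linarith [hM z (closedBall_subset_closedBall' hball hz)]) ht
  have hlower := hu.monotoneOn_add_mul hx (left_mem_Icc.2 hT) ht ht.1
  have htime : n * t * Real.arctan (n * T * Real.pi / R ^ 2)
      ≤ n * T * Real.arctan (n * T * Real.pi / R ^ 2) := by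
    gcongr
    exact ht.2
  simp only [mul_zero, add_zero] at hlower
  linarith

theorem stmt7 (n : ℕ) (hn : 1 ≤ n) (R : ℝ) (hR : 0 < R) (Θ₀ : ℝ) (hΘ₀ : 0 ≤ Θ₀)
    (u : EuclideanSpace ℝ (Fin n) → ℝ → ℝ)
    (hsmooth : ContDiffOn ℝ (⊤ : ℕ∞) (fun p : EuclideanSpace ℝ (Fin n) × ℝ => u p.1 p.2)
      (Metric.closedBall 0 (2 * R + 1) ×ˢ Set.Icc (0 : ℝ) (1 / n)))
    (hconv : ∀ t ∈ Set.Icc (0 : ℝ) (1 / n),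
      ConvexOn ℝ (Metric.closedBall (0 : EuclideanSpace ℝ (Fin n)) (2 * R + 1))
        (fun y => u y t))
    (hsym : ∀ x ∈ Metric.closedBall (0 : EuclideanSpace ℝ (Fin n)) (2 * R + 1),
      ∀ t ∈ Set.Icc (0 : ℝ) (1 / n), (hess (fun y => u y t) x).IsHermitian)
    (hPDE : ∀ x (hx : x ∈ Metric.closedBall (0 : EuclideanSpace ℝ (Fin n)) (2 * R + 1))
      t (ht : t ∈ Set.Icc (0 : ℝ) (1 / n)),
        deriv (u x) t = (∑ i, Real.arctan ((hsym x hx t ht).eigenvalues i)) - Θ₀)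
    (M : ℝ)
    (hosc : ∀ x ∈ Metric.closedBall (0 : EuclideanSpace ℝ (Fin n)) (2 * R + 1),
      ∀ y ∈ Metric.closedBall (0 : EuclideanSpace ℝ (Fin n)) (2 * R + 1),
        u x 0 - u y 0 ≤ M) :
    ∀ x ∈ Metric.closedBall (0 : EuclideanSpace ℝ (Fin n)) 1,
      ∀ t ∈ Set.Icc (0 : ℝ) (1 / n),
        ‖gradient (fun y => u y t) x‖ ≤ (1 / R) * (M + Real.arctan (Real.pi / R ^ 2)) := by
  intro x hx t ht
  have hu : IsConvexAngleFlow u 0 (2 * R + 1) (1 / n) Θ₀ :=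
    .of_contDiffOn (hsmooth.of_le (WithTop.coe_le_coe.2 (le_top : (2 : ℕ∞) ≤ ⊤)))
      (fun s hs => (hconv s hs).subset ball_subset_closedBall (convex_ball _ _))
      fun y hy s hs _ => hPDE y (ball_subset_closedBall hy) s (Ioo_subset_Icc_self hs)
  have hball : 2 * R + dist x 0 ≤ 2 * R + 1 := by linarith [mem_closedBall.1 hx]
  have hsub := closedBall_subset_closedBall' hball
  have hn_mul : (n : ℝ) * (1 / n) = 1 := mul_one_div_cancel (by positivity)
  simpa only [hn_mul, one_mul] using stmt7_general hR (hu.restrict hball)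
    (fun y hy => hosc y (hsub hy) x (hsub (mem_closedBall_self (by positivity)))) ht
end

section
/- Suppose u : ℝⁿ × (−∞, 0] → ℝ is a convex (in x) ancient solution of u_t = Σ arctan λ_i(D²u) − Θ₀ such that D²u(x,t) ≤ C(n)·I for all (x,t). Combined with the Liouville property for uniformly-Hessian-bounded convex ancient solutions, if additionally limsup_{t→−∞} sup_x |u(x,t)|/(|x|²+R₀) < 1/(6√n+2)² for some R₀, then there exist a symmetric matrix A, vector b, constants c, d such that u(x,t) = ½xᵀAx + b·x + c + d·t. -/
/-!
Convexity turns the quadratic growth of `u` into linear growth of `Du` with a small constant. At a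
maximum point of `∂ₑ²u + B (∂ₑu)²`, penalized by a multiple of `B |x|²` that the growth of `Du`
makes small, the linearized equation (`arctan` is concave on `[0, ∞)`) gives, as `B → 0`, the
inequality `M² ≤ (1 + M²) L` with a small `L` for the least upper bound `M` of `D²u`.

Next, double the variables and look at a maximum of
`∑ (∂ᵢⱼu(x, t) - ∂ᵢⱼu(y, t))² - N √|x - y|`, again penalized. Since `D²u` is small, the quadratic
remainder of the linearization is absorbed by the squared third derivatives that the sum of squares
produces, while the concavity of the modulus `√` gives a strictly positive term. Hence the sum
stays below `N √|x - y|` for every `N > 0`, and `D²u` does not depend on `x`.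

By the equation `∂ₜu` does not depend on `x` either, so `D²u` and then `∂ₜu` are constant.
-/

noncomputable section

open Filter Topology Set
open scoped ContDiff

/-! ### Second derivatives in one variable and maximum tests -/

section OneVariable

/-- `φ` is differentiable near `x`, with first derivative `a` and second derivative `b` at `x`. -/
def HasSecondDerivAt (φ : ℝ → ℝ) (a b x : ℝ) : Prop :=
  ∃ φ' : ℝ → ℝ, (∀ᶠ s in 𝓝 x, HasDerivAt φ (φ' s) s) ∧ φ' x = a ∧ HasDerivAt φ' b x

namespace HasSecondDerivAt

variable {φ ψ : ℝ → ℝ} {a b a' b' x : ℝ}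

lemma hasDerivAt (h : HasSecondDerivAt φ a b x) : HasDerivAt φ a x := by
  obtain ⟨φ', hφ, rfl, -⟩ := h
  exact hφ.self_of_nhds

lemma const (c : ℝ) : HasSecondDerivAt (fun _ => c) 0 0 x :=
  ⟨fun _ => 0, .of_forall fun s => hasDerivAt_const s c, rfl, hasDerivAt_const x 0⟩

lemma add (h : HasSecondDerivAt φ a b x) (h' : HasSecondDerivAt ψ a' b' x) :
    HasSecondDerivAt (fun s => φ s + ψ s) (a + a') (b + b') x := by
  obtain ⟨φ', hφ, rfl, hφ'⟩ := h
  obtain ⟨ψ', hψ, rfl, hψ'⟩ := h'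
  exact ⟨fun s => φ' s + ψ' s, by filter_upwards [hφ, hψ] with s h h' using h.add h', rfl,
    hφ'.add hψ'⟩

lemma const_mul (c : ℝ) (h : HasSecondDerivAt φ a b x) :
    HasSecondDerivAt (fun s => c * φ s) (c * a) (c * b) x := by
  obtain ⟨φ', hφ, rfl, hφ'⟩ := h
  exact ⟨fun s => c * φ' s, by filter_upwards [hφ] with s h using h.const_mul c, rfl,
    hφ'.const_mul c⟩

lemma sub (h : HasSecondDerivAt φ a b x) (h' : HasSecondDerivAt ψ a' b' x) :
    HasSecondDerivAt (fun s => φ s - ψ s) (a - a') (b - b') x := by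
  simpa [sub_eq_add_neg] using h.add (h'.const_mul (-1))

lemma sum {κ : Type*} (s : Finset κ) {φ : κ → ℝ → ℝ} {a b : κ → ℝ}
    (h : ∀ i, HasSecondDerivAt (φ i) (a i) (b i) x) :
    HasSecondDerivAt (fun y => ∑ i ∈ s, φ i y) (∑ i ∈ s, a i) (∑ i ∈ s, b i) x := by
  classical
  induction s using Finset.induction_on with
  | empty => simpa using const (0 : ℝ)
  | insert i s hi ih => simpa only [Finset.sum_insert hi] using (h i).add ih

lemma sq (h : HasSecondDerivAt φ a b x) :
    HasSecondDerivAt (fun s => φ s ^ 2) (2 * φ x * a) (2 * (a ^ 2 + φ x * b)) x := by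
  have h₁ := h.hasDerivAt
  obtain ⟨φ', hφ, rfl, hφ'⟩ := h
  refine ⟨fun s => 2 * φ s * φ' s, ?_, rfl, ?_⟩
  · filter_upwards [hφ] with s h
    simpa using h.fun_pow 2
  · exact ((h₁.const_mul 2).mul hφ').congr_deriv (by ring)

lemma sqrt (h : HasSecondDerivAt φ a b x) (hx : 0 < φ x) :
    HasSecondDerivAt (fun s => √(φ s)) (a / (2 * √(φ x)))
      (b / (2 * √(φ x)) - a ^ 2 / (4 * √(φ x) ^ 3)) x := by
  have h₁ := h.hasDerivAt
  obtain ⟨φ', hφ, rfl, hφ'⟩ := h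
  have hpos : 0 < √(φ x) := Real.sqrt_pos.2 hx
  refine ⟨fun s => φ' s / (2 * √(φ s)), ?_, rfl, ?_⟩
  · filter_upwards [hφ, h₁.continuousAt.eventually_ne hx.ne'] with s h hs using h.sqrt hs
  · refine (hφ'.div ((h₁.sqrt hx.ne').const_mul 2) (by positivity)).congr_deriv ?_
    field_simp
    ring

lemma nonpos_of_isLocalMax (h : HasSecondDerivAt φ a b x) (hmax : IsLocalMax φ x) : b ≤ 0 := by
  obtain ⟨φ', hφ, -, hφ'⟩ := h
  by_contra! hb
  have hderiv : deriv φ =ᶠ[𝓝 x] φ' := by filter_upwards [hφ] with s h using h.deriv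
  have hderiv₂ : deriv (deriv φ) x = b := hderiv.deriv_eq.trans hφ'.deriv
  have hmin : IsLocalMin φ x :=
    isLocalMin_of_deriv_deriv_pos (hderiv₂ ▸ hb) hmax.deriv_eq_zero
      hφ.self_of_nhds.continuousAt
  have hconst : φ =ᶠ[𝓝 x] fun _ => φ x := by
    filter_upwards [hmax, hmin] with s h h' using le_antisymm h h'
  have hzero : deriv (deriv φ) x = 0 := by simpa using hconst.deriv.deriv_eq
  exact hb.ne' (hderiv₂.symm.trans hzero)

lemma nonneg_of_isLocalMin (h : HasSecondDerivAt φ a b x) (hmin : IsLocalMin φ x) : 0 ≤ b := by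
  have := (h.const_mul (-1)).nonpos_of_isLocalMax (by simpa using hmin.neg)
  linarith

end HasSecondDerivAt

lemma deriv_nonneg_of_le_on_left {φ : ℝ → ℝ} {a t : ℝ} (h : HasDerivAt φ a t)
    (hmax : ∀ s ≤ t, φ s ≤ φ t) : 0 ≤ a := by
  refine ge_of_tendsto ((hasDerivWithinAt_iff_tendsto_slope' (by simp)).1
    (h.hasDerivWithinAt (s := Iio t))) ?_
  filter_upwards [self_mem_nhdsWithin] with s hs
  rw [slope_def_field]
  exact div_nonneg_of_nonpos (by linarith [hmax s (mem_Iio.1 hs).le]) (by linarith [mem_Iio.1 hs])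

end OneVariable

section SlabMaximum

variable {Z : Type*} [NormedAddCommGroup Z] [ProperSpace Z]

lemma tendsto_sq_norm_sub_cocompact_inf_slab {ε s : ℝ} (hε : 0 < ε) (hs : 0 < s) (t₀ : ℝ) :
    Tendsto (fun p : Z × ℝ => ε * ‖p.1‖ ^ 2 - s * p.2)
      (cocompact (Z × ℝ) ⊓ 𝓟 {p | p.2 ≤ t₀}) atTop := by
  refine tendsto_atTop.2 fun K => ?_
  have hnorm : ∀ᶠ p : Z × ℝ in cocompact (Z × ℝ),
      1 + (|K| + s * |t₀|) / ε + |t₀| + (|K| / s) ≤ ‖p‖ :=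
    (tendsto_norm_cocompact_atTop (E := Z × ℝ)).eventually_ge_atTop _
  filter_upwards [hnorm.filter_mono inf_le_left, mem_inf_of_right (mem_principal_self _)]
    with p hp ht
  have ht₀ : p.2 ≤ t₀ := ht
  have hK₁ : (|K| + s * |t₀|) / ε * ε = |K| + s * |t₀| := div_mul_cancel₀ _ hε.ne'
  have hK₂ : |K| / s * s = |K| := div_mul_cancel₀ _ hs.ne'
  have hK₁' : 0 ≤ (|K| + s * |t₀|) / ε := by positivity
  have hK₂' : 0 ≤ |K| / s := by positivity
  rcases le_max_iff.1 (hp.trans (Prod.norm_def p).le) with hx | ht'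
  · have hsq : (|K| + s * |t₀|) / ε ≤ ‖p.1‖ ^ 2 := by nlinarith [abs_nonneg t₀]
    nlinarith [le_abs_self K, le_abs_self t₀]
  · have hneg : ‖p.2‖ = -p.2 := by
      rw [Real.norm_eq_abs, abs_of_neg]
      by_contra! h
      rw [Real.norm_eq_abs, abs_of_nonneg h] at ht'
      linarith [le_abs_self t₀]
    have : |K| / s ≤ -p.2 := by rw [← hneg]; linarith [abs_nonneg t₀]
    nlinarith [le_abs_self K, sq_nonneg ‖p.1‖]

lemma exists_isMaxOn_slab {Ψ : Z × ℝ → ℝ} {t₀ C ε s : ℝ} (hε : 0 < ε) (hs : 0 < s)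
    (hcont : ContinuousOn Ψ {p | p.2 ≤ t₀})
    (hle : ∀ p, p.2 ≤ t₀ → Ψ p ≤ C - ε * ‖p.1‖ ^ 2 + s * p.2) :
    ∃ p, p.2 ≤ t₀ ∧ ∀ q : Z × ℝ, q.2 ≤ t₀ → Ψ q ≤ Ψ p := by
  have hclosed : IsClosed {p : Z × ℝ | p.2 ≤ t₀} := isClosed_le continuous_snd continuous_const
  have hmem : ((0, t₀) : Z × ℝ) ∈ {p : Z × ℝ | p.2 ≤ t₀} := le_refl t₀
  obtain ⟨p, hp, hmax⟩ := hcont.exists_isMaxOn' hclosed hmem (by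
    filter_upwards [(tendsto_sq_norm_sub_cocompact_inf_slab hε hs t₀).eventually_ge_atTop
      (C - Ψ (0, t₀)), mem_inf_of_right (mem_principal_self _)] with p hp ht
    linarith [hle p ht])
  exact ⟨p, hp, fun q hq => hmax hq⟩

end SlabMaximum

section NormAlongLines

variable {E : Type*} [NormedAddCommGroup E] [InnerProductSpace ℝ E]

lemma hasSecondDerivAt_norm_sq (x v : E) :
    HasSecondDerivAt (fun s : ℝ => ‖x + s • v‖ ^ 2) (2 * inner ℝ x v) (2 * ‖v‖ ^ 2) 0 := by
  have hline (s : ℝ) : HasDerivAt (fun s : ℝ => x + s • v) v s := by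
    simpa using ((hasDerivAt_id s).smul_const v).const_add x
  refine ⟨fun s => 2 * inner ℝ (x + s • v) v, .of_forall fun s => (hline s).norm_sq, by simp, ?_⟩
  simpa [real_inner_self_eq_norm_sq] using
    (((hline 0).inner ℝ (hasDerivAt_const (0 : ℝ) v)).const_mul 2)

lemma hasSecondDerivAt_sqrt_norm {z : E} (hz : z ≠ 0) (w : E) :
    HasSecondDerivAt (fun s : ℝ => √‖z + s • w‖) (inner ℝ z w / (2 * √‖z‖ ^ 3))
      ((‖w‖ ^ 2 / 2 - 3 / 4 * (inner ℝ z w ^ 2 / ‖z‖ ^ 2)) / √‖z‖ ^ 3) 0 := by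
  have hpos : 0 < ‖z‖ := norm_pos_iff.2 hz
  have hm : 0 < √‖z‖ := Real.sqrt_pos.2 hpos
  have hm2 : ‖z‖ = √‖z‖ ^ 2 := (Real.sq_sqrt hpos.le).symm
  have hsq : √(‖z + (0 : ℝ) • w‖ ^ 2) = ‖z‖ := by simp
  have hnorm := (hasSecondDerivAt_norm_sq z w).sqrt (by simpa using by positivity)
  have hroot := hnorm.sqrt (by simpa using hpos)
  simp only [hsq] at hroot
  simp only [Real.sqrt_sq (norm_nonneg _)] at hroot
  convert hroot using 1
  · generalize √‖z‖ = m at *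
    rw [hm2]; field_simp
  · generalize √‖z‖ = m at *
    rw [hm2]; field_simp; ring

end NormAlongLines

/-! ### Orthonormal bases and bilinear forms -/

section BilinearForms

open LinearMap (BilinForm)

variable {E ι κ : Type*} [NormedAddCommGroup E] [InnerProductSpace ℝ E] [Fintype ι] [Fintype κ]

lemma nonempty_index_of_ne_zero (b : OrthonormalBasis ι ℝ E) {v : E} (hv : v ≠ 0) : Nonempty ι :=
  have : Nontrivial E := ⟨v, 0, hv⟩
  b.toBasis.index_nonempty

lemma sum_inner_mul_apply (b : OrthonormalBasis ι ℝ E) (l : E →ₗ[ℝ] ℝ) (v : E) :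
    ∑ i, inner ℝ (b i) v * l (b i) = l v := by
  conv_rhs => rw [← b.sum_repr' v]
  simp only [map_sum, map_smul, smul_eq_mul]

lemma sum_bilinForm_diag_eq (b : OrthonormalBasis ι ℝ E) (b' : OrthonormalBasis κ ℝ E)
    (B : BilinForm ℝ E) : ∑ i, B (b i) (b i) = ∑ j, B (b' j) (b' j) := by
  calc ∑ i, B (b i) (b i) = ∑ i, ∑ j, inner ℝ (b' j) (b i) * B (b' j) (b i) :=
        Finset.sum_congr rfl fun i _ => (sum_inner_mul_apply b' (B.flip (b i)) (b i)).symm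
    _ = ∑ j, ∑ i, inner ℝ (b i) (b' j) * B (b' j) (b i) := by
        rw [Finset.sum_comm]
        simp only [real_inner_comm]
    _ = ∑ j, B (b' j) (b' j) :=
        Finset.sum_congr rfl fun j _ => sum_inner_mul_apply b (B (b' j)) (b' j)

lemma sum_sq_linearMap_eq (b : OrthonormalBasis ι ℝ E) (b' : OrthonormalBasis κ ℝ E)
    (l : E →ₗ[ℝ] ℝ) : ∑ i, l (b i) ^ 2 = ∑ j, l (b' j) ^ 2 := by
  simpa [sq] using sum_bilinForm_diag_eq b b' (l.smulRight l)

lemma sum_sq_bilinForm_eq (b : OrthonormalBasis ι ℝ E) (b' : OrthonormalBasis κ ℝ E)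
    (B : BilinForm ℝ E) :
    ∑ i, ∑ j, B (b i) (b j) ^ 2 = ∑ i, ∑ j, B (b' i) (b' j) ^ 2 := by
  calc ∑ i, ∑ j, B (b i) (b j) ^ 2 = ∑ i, ∑ j, B (b i) (b' j) ^ 2 :=
        Finset.sum_congr rfl fun i _ => sum_sq_linearMap_eq b b' (B (b i))
    _ = ∑ j, ∑ i, B (b i) (b' j) ^ 2 := Finset.sum_comm
    _ = ∑ j, ∑ i, B (b' i) (b' j) ^ 2 :=
        Finset.sum_congr rfl fun j _ => sum_sq_linearMap_eq b b' (B.flip (b' j))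
    _ = ∑ i, ∑ j, B (b' i) (b' j) ^ 2 := Finset.sum_comm

/-- `B` is diagonal in the orthonormal basis `b`; its eigenvalues are then the numbers
`B (b i) (b i)`. -/
def IsDiagonalIn (B : BilinForm ℝ E) (b : OrthonormalBasis ι ℝ E) : Prop :=
  ∀ i w, B (b i) w = B (b i) (b i) * inner ℝ (b i) w

lemma exists_orthonormalBasis_isDiagonalIn (b : OrthonormalBasis ι ℝ E) {V : BilinForm ℝ E}
    (hV : V.IsSymm) : ∃ e : OrthonormalBasis ι ℝ E, IsDiagonalIn V e := by
  have : FiniteDimensional ℝ E := b.toBasis.finiteDimensional_of_finite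
  let T : E →ₗ[ℝ] E := ∑ k, (V.flip (b k)).smulRight (b k)
  have hT (v w : E) : inner ℝ (T v) w = V v w := by
    rw [← sum_inner_mul_apply b (V v) w]
    simp only [T, LinearMap.sum_apply, LinearMap.smulRight_apply, LinearMap.BilinForm.flip_apply,
      sum_inner, real_inner_smul_left, mul_comm]
  have hTsymm : T.IsSymmetric := fun v w => by
    rw [hT, real_inner_comm, hT]
    exact hV.eq v w
  have hcard : Module.finrank ℝ E = Fintype.card ι := Module.finrank_eq_card_basis b.toBasis
  have he (i : Fin (Fintype.card ι)) (w : E) :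
      V (hTsymm.eigenvectorBasis hcard i) w =
        V (hTsymm.eigenvectorBasis hcard i) (hTsymm.eigenvectorBasis hcard i) *
          inner ℝ (hTsymm.eigenvectorBasis hcard i) w := by
    simp only [← hT, hTsymm.apply_eigenvectorBasis, real_inner_smul_left,
      real_inner_self_eq_norm_sq, OrthonormalBasis.norm_eq_one, one_pow, mul_one]
  exact ⟨(hTsymm.eigenvectorBasis hcard).reindex (Fintype.equivFin ι).symm,
    fun i w => by simpa using he _ w⟩

lemma sum_mul_bilinForm_le {V B : BilinForm ℝ E} (b : OrthonormalBasis ι ℝ E) (hV : V.IsSymm)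
    {M : ℝ} (hVM : ∀ v, ‖v‖ = 1 → V v v ≤ M) (hB : ∀ v, 0 ≤ B v v) :
    ∑ i, ∑ j, V (b i) (b j) * B (b i) (b j) ≤ M * ∑ i, B (b i) (b i) := by
  classical
  obtain ⟨e, he⟩ := exists_orthonormalBasis_isDiagonalIn b hV
  have hexpand (v : E) : ∑ j, V v (b j) * B v (b j) = ∑ j, V v (e j) * B v (e j) := by
    simpa using sum_bilinForm_diag_eq b e ((V v).smulRight (B v))
  have hdiag (i : ι) : ∑ j, V (e i) (b j) * B (e i) (b j) = V (e i) (e i) * B (e i) (e i) := by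
    rw [hexpand, Finset.sum_eq_single i (fun j _ hj => ?_) (by simp)]
    rw [he, e.orthonormal.2 hj.symm, mul_zero, zero_mul]
  calc ∑ i, ∑ j, V (b i) (b j) * B (b i) (b j)
      = ∑ j, ∑ i, V (e i) (b j) * B (e i) (b j) := by
        rw [Finset.sum_comm]
        refine Finset.sum_congr rfl fun j _ => ?_
        simpa using sum_bilinForm_diag_eq b e ((V.flip (b j)).smulRight (B.flip (b j)))
    _ = ∑ i, V (e i) (e i) * B (e i) (e i) := by
        rw [Finset.sum_comm]
        exact Finset.sum_congr rfl fun i _ => hdiag i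
    _ ≤ ∑ i, M * B (e i) (e i) := Finset.sum_le_sum fun i _ =>
        mul_le_mul_of_nonneg_right (hVM _ (e.orthonormal.1 i)) (hB _)
    _ = M * ∑ i, B (b i) (b i) := by rw [← Finset.mul_sum, sum_bilinForm_diag_eq e b]

end BilinearForms

section TraceInequalities

open LinearMap (BilinForm)

variable {E ι : Type*} [NormedAddCommGroup E] [InnerProductSpace ℝ E] [Fintype ι]

lemma IsDiagonalIn.apply_eq_sum {B : BilinForm ℝ E} {b : OrthonormalBasis ι ℝ E}
    (hB : IsDiagonalIn B b) (v w : E) :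
    B v w = ∑ i, inner ℝ (b i) v * (B (b i) (b i) * inner ℝ (b i) w) := by
  rw [← LinearMap.BilinForm.flip_apply, ← sum_inner_mul_apply b (B.flip w) v]
  exact Finset.sum_congr rfl fun i _ => by rw [LinearMap.BilinForm.flip_apply, hB]

lemma IsDiagonalIn.apply_basis_right {B : BilinForm ℝ E} {b : OrthonormalBasis ι ℝ E}
    (hB : IsDiagonalIn B b) (v : E) (j : ι) : B v (b j) = B (b j) (b j) * inner ℝ (b j) v := by
  classical
  simp only [hB.apply_eq_sum v, orthonormal_iff_ite.1 b.orthonormal, mul_ite, mul_one, mul_zero,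
    Finset.sum_ite_eq', Finset.mem_univ, if_true]
  exact mul_comm _ _

-- The numbers `⟪b' j, b i⟫ ^ 2` form a doubly stochastic matrix, which reduces the inequality
-- between traces to the scalar one.
lemma sum_apply_eigenvalues_le {A B : BilinForm ℝ E} {b b' : OrthonormalBasis ι ℝ E}
    (hA : IsDiagonalIn A b) (hB : IsDiagonalIn B b') {φ φ' : ℝ → ℝ} {K : ℝ}
    (hφ : ∀ i j, φ (B (b' j) (b' j)) ≤ φ (A (b i) (b i)) +
      φ' (A (b i) (b i)) * (B (b' j) (b' j) - A (b i) (b i)) +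
      K * (B (b' j) (b' j) - A (b i) (b i)) ^ 2) :
    ∑ j, φ (B (b' j) (b' j)) ≤ ∑ i, φ (A (b i) (b i)) +
      ∑ i, φ' (A (b i) (b i)) * (B (b i) (b i) - A (b i) (b i)) +
      K * ∑ i, ∑ j, (B (b i) (b j) - A (b i) (b j)) ^ 2 := by
  set P : ι → ι → ℝ := fun i j => inner ℝ (b' j) (b i) ^ 2
  have hrow (i : ι) : ∑ j, P i j = 1 := by simpa [P] using b'.sum_sq_norm_inner_right (b i)
  have hcol (j : ι) : ∑ i, P i j = 1 := by simpa [P] using b.sum_sq_norm_inner_left (b' j)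
  have hBdiag (i : ι) : B (b i) (b i) = ∑ j, P i j * B (b' j) (b' j) := by
    rw [hB.apply_eq_sum]
    exact Finset.sum_congr rfl fun j _ => by ring
  have hquad (i : ι) : ∑ j, (B (b i) (b j) - A (b i) (b j)) ^ 2 =
      ∑ j, P i j * (B (b' j) (b' j) - A (b i) (b i)) ^ 2 := by
    refine (sum_sq_linearMap_eq b b' ((B - A) (b i))).trans (Finset.sum_congr rfl fun j _ => ?_)
    rw [LinearMap.sub_apply, LinearMap.sub_apply, hB.apply_basis_right, hA i,
      real_inner_comm (b' j) (b i)]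
    ring
  have hterm (i : ι) : ∑ j, P i j * φ (B (b' j) (b' j)) ≤ φ (A (b i) (b i)) +
      φ' (A (b i) (b i)) * (B (b i) (b i) - A (b i) (b i)) +
      K * ∑ j, (B (b i) (b j) - A (b i) (b j)) ^ 2 := by
    calc ∑ j, P i j * φ (B (b' j) (b' j))
        ≤ ∑ j, P i j * (φ (A (b i) (b i)) +
            φ' (A (b i) (b i)) * (B (b' j) (b' j) - A (b i) (b i)) +
            K * (B (b' j) (b' j) - A (b i) (b i)) ^ 2) :=
          Finset.sum_le_sum fun j _ => mul_le_mul_of_nonneg_left (hφ i j) (sq_nonneg _)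
      _ = (∑ j, P i j) * φ (A (b i) (b i)) + φ' (A (b i) (b i)) *
            (∑ j, P i j * B (b' j) (b' j) - (∑ j, P i j) * A (b i) (b i)) +
            K * ∑ j, P i j * (B (b' j) (b' j) - A (b i) (b i)) ^ 2 := by
          simp only [Finset.sum_mul, Finset.mul_sum, ← Finset.sum_sub_distrib,
            ← Finset.sum_add_distrib]
          exact Finset.sum_congr rfl fun j _ => by ring
      _ = _ := by rw [hrow, hquad, ← hBdiag, one_mul, one_mul]
  calc ∑ j, φ (B (b' j) (b' j)) = ∑ i, ∑ j, P i j * φ (B (b' j) (b' j)) := by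
        rw [Finset.sum_comm]
        simp only [← Finset.sum_mul, hcol, one_mul]
    _ ≤ _ := Finset.sum_le_sum fun i _ => hterm i
    _ = _ := by simp only [Finset.sum_add_distrib, Finset.mul_sum]

lemma exists_arctan_sub_eq (α β : ℝ) :
    ∃ ξ ∈ uIcc α β, Real.arctan β - Real.arctan α = 1 / (1 + ξ ^ 2) * (β - α) := by
  rcases eq_or_ne α β with rfl | hne
  · exact ⟨α, left_mem_uIcc, by simp⟩
  wlog hlt : α < β generalizing α β
  · obtain ⟨ξ, hξ, h⟩ := this β α hne.symm (lt_of_le_of_ne (not_lt.1 hlt) hne.symm)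
    exact ⟨ξ, uIcc_comm α β ▸ hξ, by linarith⟩
  obtain ⟨ξ, hξ, h⟩ := exists_hasDerivAt_eq_slope Real.arctan (fun x => 1 / (1 + x ^ 2)) hlt
    Real.continuous_arctan.continuousOn (fun x _ => Real.hasDerivAt_arctan x)
  refine ⟨ξ, Icc_subset_uIcc (Ioo_subset_Icc_self hξ), ?_⟩
  rw [h, div_mul_cancel₀ _ (sub_ne_zero.2 hlt.ne')]

lemma arctan_tangent_bounds {α β M : ℝ} (hα : α ∈ Icc 0 M) (hβ : β ∈ Icc 0 M) :
    Real.arctan β ≤ Real.arctan α + 1 / (1 + α ^ 2) * (β - α) ∧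
    Real.arctan α + 1 / (1 + α ^ 2) * (β - α) - 2 * M * (β - α) ^ 2 ≤ Real.arctan β := by
  obtain ⟨ξ, hξ, heq⟩ := exists_arctan_sub_eq α β
  obtain ⟨hξ₀, hξM⟩ : ξ ∈ Icc 0 M := uIcc_subset_Icc hα hβ hξ
  obtain ⟨hprod, hprod_le⟩ :
      0 ≤ (ξ - α) * (β - α) ∧ (ξ - α) * (β - α) ≤ (β - α) ^ 2 := by
    rcases mem_uIcc.1 hξ with h | h <;> constructor <;> nlinarith
  have hα₀ := hα.1
  set r : ℝ := (ξ + α) / ((1 + ξ ^ 2) * (1 + α ^ 2))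
  have hr₀ : 0 ≤ r := by positivity
  have hr : r ≤ 2 * M := by
    have : 1 ≤ (1 + ξ ^ 2) * (1 + α ^ 2) :=
      one_le_mul_of_one_le_of_one_le (by nlinarith) (by nlinarith)
    exact (div_le_self (by positivity) this).trans (by linarith [hα.2])
  have hgap : 1 / (1 + ξ ^ 2) * (β - α) =
      1 / (1 + α ^ 2) * (β - α) - (ξ - α) * (β - α) * r := by
    simp only [r]
    field_simp
    ring
  have hlower : (ξ - α) * (β - α) * r ≤ (β - α) ^ 2 * (2 * M) :=
    mul_le_mul hprod_le hr hr₀ (sq_nonneg _)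
  constructor <;> linarith [mul_nonneg hprod hr₀]

end TraceInequalities

/-! ### Calculus in space-time -/

/-- The part of space-time at negative times. -/
def past (E : Type*) : Set (E × ℝ) := {p | p.2 < 0}

lemma isOpen_past {E : Type*} [TopologicalSpace E] : IsOpen (past E) :=
  isOpen_lt continuous_snd continuous_const

/-- The derivative of `f` in the space-time direction `w`, as a function on space-time. -/
def dirDeriv {E : Type*} [NormedAddCommGroup E] [NormedSpace ℝ E] (w : E × ℝ)
    (f : E × ℝ → ℝ) : E × ℝ → ℝ :=
  fun p => fderiv ℝ f p w

local notation:max "∂ₓ" v:max => dirDeriv (v, 0)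
local notation "∂ₜ" => dirDeriv (0, 1)

section SpaceTime

open LinearMap (BilinForm)

variable {E : Type*} [NormedAddCommGroup E] [NormedSpace ℝ E]

/-- Smoothness of a space-time function at negative times. -/
def PastSmooth (f : E × ℝ → ℝ) : Prop := ContDiffOn ℝ ∞ f (past E)

/-- The spatial Hessian of `f` as a bilinear form. -/
def spaceHessian (f : E × ℝ → ℝ) (p : E × ℝ) : BilinForm ℝ E :=
  ((fderiv ℝ (fderiv ℝ f) p).bilinearComp (.inl ℝ E ℝ) (.inl ℝ E ℝ)).toLinearMap₁₂

/-- The operator `∂ₜ - ∑ γᵢ ∂_{bᵢ}²` with constant coefficients `γ` in the directions `b`. -/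
def heatOp {ι : Type*} [Fintype ι] (b : ι → E) (γ : ι → ℝ) (f : E × ℝ → ℝ) : E × ℝ → ℝ :=
  fun p => ∂ₜ f p - ∑ i, γ i * ∂ₓ (b i) (∂ₓ (b i) f) p

variable {f g : E × ℝ → ℝ} {p : E × ℝ}

namespace PastSmooth

lemma contDiffAt (hf : PastSmooth f) (hp : p ∈ past E) : ContDiffAt ℝ ∞ f p :=
  ContDiffOn.contDiffAt hf (isOpen_past.mem_nhds hp)

lemma differentiableAt (hf : PastSmooth f) (hp : p ∈ past E) : DifferentiableAt ℝ f p :=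
  (hf.contDiffAt hp).differentiableAt (by simp)

lemma dirDeriv (hf : PastSmooth f) (w : E × ℝ) : PastSmooth (dirDeriv w f) :=
  (ContDiffOn.fderiv_of_isOpen hf isOpen_past (by simp)).clm_apply contDiffOn_const

lemma spaceDeriv₂ (hf : PastSmooth f) (v w : E) : PastSmooth (∂ₓ v (∂ₓ w f)) :=
  (hf.dirDeriv _).dirDeriv _

lemma differentiableAt_fderiv (hf : PastSmooth f) (hp : p ∈ past E) :
    DifferentiableAt ℝ (fderiv ℝ f) p :=
  ((ContDiffOn.fderiv_of_isOpen hf isOpen_past (m := ∞) (by simp)).contDiffAt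
    (isOpen_past.mem_nhds hp)).differentiableAt (by simp)

lemma heatOp {ι : Type*} [Fintype ι] (hf : PastSmooth f) (b : ι → E) (γ : ι → ℝ) :
    PastSmooth (heatOp b γ f) :=
  ContDiffOn.sub (hf.dirDeriv _)
    (ContDiffOn.sum fun i _ => contDiffOn_const.mul (hf.spaceDeriv₂ (b i) (b i)))

end PastSmooth

lemma spaceDeriv_smul (f : E × ℝ → ℝ) (p : E × ℝ) (s : ℝ) (v : E) :
    ∂ₓ (s • v) f p = s * ∂ₓ v f p := by
  have : ((s • v, 0) : E × ℝ) = s • (v, 0) := by simp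
  simp only [dirDeriv, this, map_smul, smul_eq_mul]

lemma dirDeriv_congr (h : EqOn f g (past E)) (w : E × ℝ) :
    EqOn (dirDeriv w f) (dirDeriv w g) (past E) := fun p hp => by
  have : f =ᶠ[𝓝 p] g := by filter_upwards [isOpen_past.mem_nhds hp] with q hq using h hq
  simp only [dirDeriv, this.fderiv_eq]

lemma dirDeriv_dirDeriv (hf : PastSmooth f) (hp : p ∈ past E) (v w : E × ℝ) :
    dirDeriv v (dirDeriv w f) p = fderiv ℝ (fderiv ℝ f) p v w := by
  have h := ((hf.differentiableAt_fderiv hp).hasFDerivAt.clm_apply (hasFDerivAt_const w p)).fderiv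
  change fderiv ℝ (fun q => fderiv ℝ f q w) p v = _
  simp [h]

lemma dirDeriv_comm (hf : PastSmooth f) (v w : E × ℝ) :
    EqOn (dirDeriv v (dirDeriv w f)) (dirDeriv w (dirDeriv v f)) (past E) := fun p hp => by
  have hsymm : IsSymmSndFDerivAt ℝ f p :=
    (hf.contDiffAt hp).isSymmSndFDerivAt (by
      rw [minSmoothness_of_isRCLikeNormedField]
      exact WithTop.coe_le_coe.2 (le_top (a := (2 : ℕ∞))))
  rw [dirDeriv_dirDeriv hf hp, dirDeriv_dirDeriv hf hp, hsymm v w]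

lemma spaceHessian_apply (hf : PastSmooth f) (hp : p ∈ past E) (v w : E) :
    spaceHessian f p v w = ∂ₓ v (∂ₓ w f) p :=
  (dirDeriv_dirDeriv hf hp (v, 0) (w, 0)).symm

lemma isSymm_spaceHessian (hf : PastSmooth f) (hp : p ∈ past E) : (spaceHessian f p).IsSymm :=
  ⟨fun v w => by
    change spaceHessian f p v w = spaceHessian f p w v
    rw [spaceHessian_apply hf hp, spaceHessian_apply hf hp,
      dirDeriv_comm hf _ _ hp]⟩

lemma dirDeriv_heatOp {ι : Type*} [Fintype ι] (hf : PastSmooth f) (b : ι → E) (γ : ι → ℝ)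
    (w : E × ℝ) :
    EqOn (dirDeriv w (heatOp b γ f)) (heatOp b γ (dirDeriv w f)) (past E) := fun p hp => by
  have hderiv : HasFDerivAt (heatOp b γ f)
      (fderiv ℝ (∂ₜ f) p - ∑ i, γ i • fderiv ℝ (∂ₓ (b i) (∂ₓ (b i) f)) p) p :=
    ((hf.dirDeriv _).differentiableAt hp).hasFDerivAt.sub (HasFDerivAt.fun_sum fun i _ =>
      ((hf.spaceDeriv₂ _ _).differentiableAt hp).hasFDerivAt.const_mul (γ i))
  have hswap (i : ι) : dirDeriv w (∂ₓ (b i) (∂ₓ (b i) f)) p =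
      ∂ₓ (b i) (∂ₓ (b i) (dirDeriv w f)) p := by
    rw [dirDeriv_comm (hf.dirDeriv _) _ _ hp]
    exact dirDeriv_congr (dirDeriv_comm hf _ _) _ hp
  calc dirDeriv w (heatOp b γ f) p
      = dirDeriv w (∂ₜ f) p - ∑ i, γ i * dirDeriv w (∂ₓ (b i) (∂ₓ (b i) f)) p := by
        simp [dirDeriv, hderiv.fderiv]
    _ = heatOp b γ (dirDeriv w f) p := by
        simp only [heatOp, hswap, dirDeriv_comm hf w (0, 1) hp]

lemma spaceHessian_heatOp {ι : Type*} [Fintype ι] (hf : PastSmooth f) (hp : p ∈ past E)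
    (b : ι → E) (γ : ι → ℝ) (v w : E) :
    spaceHessian (heatOp b γ f) p v w = heatOp b γ (∂ₓ v (∂ₓ w f)) p := by
  rw [spaceHessian_apply (hf.heatOp b γ) hp, dirDeriv_congr (dirDeriv_heatOp hf b γ _) _ hp,
    dirDeriv_heatOp (hf.dirDeriv _) b γ _ hp]

lemma PastSmooth.hasDerivAt_line (hf : PastSmooth f) (x v : E) {t : ℝ} (ht : t < 0) (s : ℝ) :
    HasDerivAt (fun s : ℝ => f (x + s • v, t)) (∂ₓ v f (x + s • v, t)) s := by
  have hline : HasDerivAt (fun s : ℝ => (x + s • v, t)) (v, (0 : ℝ)) s := by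
    simpa using (((hasDerivAt_id s).smul_const v).const_add x).prodMk (hasDerivAt_const s t)
  exact (hf.differentiableAt (p := (x + s • v, t)) ht).hasFDerivAt.comp_hasDerivAt s hline

lemma PastSmooth.hasSecondDerivAt_line (hf : PastSmooth f) (x v : E) {t : ℝ} (ht : t < 0) :
    HasSecondDerivAt (fun s : ℝ => f (x + s • v, t)) (∂ₓ v f (x, t)) (∂ₓ v (∂ₓ v f) (x, t)) 0 :=
  ⟨fun s => ∂ₓ v f (x + s • v, t), .of_forall (hf.hasDerivAt_line x v ht), by simp,
    by simpa using (hf.dirDeriv (v, 0)).hasDerivAt_line x v ht 0⟩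

lemma PastSmooth.hasDerivAt_time (hf : PastSmooth f) (x : E) {t : ℝ} (ht : t < 0) :
    HasDerivAt (fun s : ℝ => f (x, s)) (∂ₜ f (x, t)) t :=
  (hf.differentiableAt (p := (x, t)) ht).hasFDerivAt.comp_hasDerivAt t
    ((hasDerivAt_const t x).prodMk (hasDerivAt_id t))

end SpaceTime

/-! ### Convex solutions and their linearizations -/

section ConvexFlow

variable {E ι κ : Type*} [NormedAddCommGroup E] [InnerProductSpace ℝ E] [Fintype ι] [Fintype κ]
  {f : E × ℝ → ℝ} {p : E × ℝ} {M Θ : ℝ}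

/-- Convex solutions, on negative times, of the potential equation
`∂ₜ f = ∑ arctan λᵢ - Θ` of Lagrangian mean curvature flow, the `λᵢ` being the eigenvalues of the
spatial Hessian. The type `ι` indexes the eigenvalues, so its cardinality is the dimension. -/
structure IsConvexFlow (ι : Type*) [Fintype ι] (Θ : ℝ) (f : E × ℝ → ℝ) : Prop where
  smooth : PastSmooth f
  convexOn : ∀ t < 0, ConvexOn ℝ univ fun x => f (x, t)
  equation : ∀ p ∈ past E, ∃ b : OrthonormalBasis ι ℝ E, IsDiagonalIn (spaceHessian f p) b ∧
    ∂ₜ f p = ∑ i, Real.arctan (spaceHessian f p (b i) (b i)) - Θ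

/-- The spatial Hessian of `f` is at most `M` at all negative times. -/
def HessianLE (f : E × ℝ → ℝ) (M : ℝ) : Prop :=
  ∀ p ∈ past E, ∀ v, ‖v‖ = 1 → ∂ₓ v (∂ₓ v f) p ≤ M

/-- The operator `heatOp b γ` is uniformly parabolic and governs `f` to first order around `p`:
`heatOp b γ f` is maximal at `p`, with a deficit quadratic in the change of the Hessian. -/
structure IsLinearizationAt (f : E × ℝ → ℝ) (M : ℝ) (p : E × ℝ) (b : OrthonormalBasis ι ℝ E)
    (γ : ι → ℝ) : Prop where
  le_coeff : ∀ i, 1 / (1 + M ^ 2) ≤ γ i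
  coeff_le_one : ∀ i, γ i ≤ 1
  heatOp_le : ∀ q ∈ past E, heatOp b γ f q ≤ heatOp b γ f p
  le_heatOp_add : ∀ q ∈ past E, heatOp b γ f p ≤ heatOp b γ f q +
    2 * M * ∑ i, ∑ j, (∂ₓ (b i) (∂ₓ (b j) f) q - ∂ₓ (b i) (∂ₓ (b j) f) p) ^ 2

lemma add_spaceDeriv_le_of_convexOn (hf : PastSmooth f) {t : ℝ} (ht : t < 0)
    (hconv : ConvexOn ℝ univ fun x => f (x, t)) (x v : E) :
    f (x, t) + ∂ₓ v f (x, t) ≤ f (x + v, t) := by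
  have hline : ConvexOn ℝ univ fun s : ℝ => f (x + s • v, t) := by
    simpa [Function.comp_def, AffineMap.lineMap_apply_module', add_comm] using
      hconv.comp_affineMap (AffineMap.lineMap x (x + v))
  have hslope := hline.le_slope_of_hasDerivAt (mem_univ (0 : ℝ)) (mem_univ 1) one_pos
    (hf.hasDerivAt_line x v ht 0)
  simp only [slope_def_field, zero_smul, one_smul, add_zero, sub_zero, div_one] at hslope
  linarith

lemma IsConvexFlow.spaceDeriv₂_nonneg (hf : IsConvexFlow ι Θ f) (hp : p ∈ past E) (v : E) :
    0 ≤ ∂ₓ v (∂ₓ v f) p := by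
  obtain ⟨x, t⟩ := p
  have hid : HasSecondDerivAt (fun s : ℝ => s) 1 0 0 :=
    ⟨fun _ => 1, .of_forall hasDerivAt_id, rfl, hasDerivAt_const _ _⟩
  have htangent := (hf.smooth.hasSecondDerivAt_line x v hp).sub (hid.const_mul (∂ₓ v f (x, t)))
  simp only [mul_zero, sub_zero] at htangent
  refine htangent.nonneg_of_isLocalMin (.of_forall fun s => ?_)
  have := add_spaceDeriv_le_of_convexOn hf.smooth hp (hf.convexOn t hp) x (s • v)
  rw [spaceDeriv_smul] at this
  simp only [zero_smul, add_zero, mul_zero, sub_zero]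
  linarith

lemma IsConvexFlow.exists_isLinearizationAt (hf : IsConvexFlow ι Θ f) (hM : HessianLE f M)
    (hp : p ∈ past E) :
    ∃ (b : OrthonormalBasis ι ℝ E) (γ : ι → ℝ), IsLinearizationAt f M p b γ := by
  obtain ⟨b, hb, hpde⟩ := hf.equation p hp
  have heig {q : E × ℝ} (hq : q ∈ past E) (e : OrthonormalBasis ι ℝ E) (i : ι) :
      spaceHessian f q (e i) (e i) ∈ Icc 0 M := by
    rw [spaceHessian_apply hf.smooth hq]
    exact ⟨hf.spaceDeriv₂_nonneg hq _, hM q hq _ (e.norm_eq_one i)⟩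
  have hheat {q : E × ℝ} (hq : q ∈ past E) :
      heatOp b (fun i => 1 / (1 + spaceHessian f p (b i) (b i) ^ 2)) f q = ∂ₜ f q -
        ∑ i, 1 / (1 + spaceHessian f p (b i) (b i) ^ 2) * spaceHessian f q (b i) (b i) := by
    simp only [heatOp, spaceHessian_apply hf.smooth hq]
  refine ⟨b, fun i => 1 / (1 + spaceHessian f p (b i) (b i) ^ 2), fun i => ?_, fun i => ?_,
    fun q hq => ?_, fun q hq => ?_⟩
  · obtain ⟨h₀, hle⟩ := heig hp b i
    gcongr
  · exact div_le_one_of_le₀ (by nlinarith) (by positivity)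
  · obtain ⟨b', hb', hpde'⟩ := hf.equation q hq
    have := sum_apply_eigenvalues_le hb hb' (φ := Real.arctan) (φ' := fun s => 1 / (1 + s ^ 2))
      (K := 0) fun i j => by
        simpa using (arctan_tangent_bounds (heig hp b i) (heig hq b' j)).1
    rw [hheat hp, hheat hq, hpde, hpde']
    simp only [mul_sub, Finset.sum_sub_distrib] at this
    linarith
  · obtain ⟨b', hb', hpde'⟩ := hf.equation q hq
    have := sum_apply_eigenvalues_le hb hb' (φ := fun s => -Real.arctan s)
      (φ' := fun s => -(1 / (1 + s ^ 2))) (K := 2 * M) fun i j => by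
        linarith [(arctan_tangent_bounds (heig hp b i) (heig hq b' j)).2]
    rw [hheat hp, hheat hq, hpde, hpde']
    simp only [mul_sub, Finset.sum_sub_distrib, Finset.sum_neg_distrib, neg_mul,
      spaceHessian_apply hf.smooth hp, spaceHessian_apply hf.smooth hq] at this ⊢
    linarith

namespace IsLinearizationAt

variable {b : OrthonormalBasis ι ℝ E} {γ : ι → ℝ}

lemma heatOp_spaceDeriv_eq_zero (h : IsLinearizationAt f M p b γ) (hf : PastSmooth f)
    (hp : p ∈ past E) (v : E) : heatOp b γ (∂ₓ v f) p = 0 := by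
  obtain ⟨x, t⟩ := p
  rw [← dirDeriv_heatOp hf b γ _ hp]
  refine IsLocalMax.hasDerivAt_eq_zero (f := fun s : ℝ => heatOp b γ f (x + s • v, t)) (a := 0)
    (.of_forall fun s => ?_) (by simpa using (hf.heatOp b γ).hasDerivAt_line x v hp 0)
  simpa using h.heatOp_le (x + s • v, t) hp

lemma heatOp_spaceDeriv₂_nonpos (h : IsLinearizationAt f M p b γ) (hf : PastSmooth f)
    (hp : p ∈ past E) (v : E) : heatOp b γ (∂ₓ v (∂ₓ v f)) p ≤ 0 := by
  obtain ⟨x, t⟩ := p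
  rw [← spaceHessian_heatOp hf hp, spaceHessian_apply (hf.heatOp b γ) hp]
  refine ((hf.heatOp b γ).hasSecondDerivAt_line x v hp).nonpos_of_isLocalMax
    (.of_forall fun s => ?_)
  simpa using h.heatOp_le (x + s • v, t) hp

end IsLinearizationAt

lemma spaceDeriv₃_eq_spaceHessian (hf : PastSmooth f) (hp : p ∈ past E) (v w w' : E) :
    ∂ₓ v (∂ₓ w (∂ₓ w' f)) p = spaceHessian (∂ₓ v f) p w w' := by
  rw [spaceHessian_apply (hf.dirDeriv _) hp, dirDeriv_comm (hf.dirDeriv _) _ _ hp]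
  exact dirDeriv_congr (dirDeriv_comm hf _ _) _ hp

lemma sum_sq_spaceDeriv₃_eq (hf : PastSmooth f) (hp : p ∈ past E) (b : OrthonormalBasis ι ℝ E)
    (b' : OrthonormalBasis κ ℝ E) (v : E) :
    ∑ i, ∑ j, ∂ₓ v (∂ₓ (b i) (∂ₓ (b j) f)) p ^ 2 =
      ∑ i, ∑ j, ∂ₓ v (∂ₓ (b' i) (∂ₓ (b' j) f)) p ^ 2 := by
  simp only [spaceDeriv₃_eq_spaceHessian hf hp]
  exact sum_sq_bilinForm_eq b b' _

lemma IsLinearizationAt.le_heatOp_spaceDeriv₂ {b : OrthonormalBasis ι ℝ E} {γ : ι → ℝ}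
    (h : IsLinearizationAt f M p b γ) (hf : PastSmooth f) (hp : p ∈ past E)
    (o : OrthonormalBasis κ ℝ E) (v : E) :
    -(4 * M * ∑ i, ∑ j, ∂ₓ v (∂ₓ (o i) (∂ₓ (o j) f)) p ^ 2) ≤ heatOp b γ (∂ₓ v (∂ₓ v f)) p := by
  obtain ⟨x, t⟩ := p
  rw [← spaceHessian_heatOp hf hp, spaceHessian_apply (hf.heatOp b γ) hp,
    sum_sq_spaceDeriv₃_eq hf hp o b]
  have hentry (i j : ι) := (((hf.spaceDeriv₂ (b i) (b j)).hasSecondDerivAt_line x v hp).sub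
    (.const (∂ₓ (b i) (∂ₓ (b j) f) (x, t)))).sq
  have hderiv := ((hf.heatOp b γ).hasSecondDerivAt_line x v hp).add
    ((HasSecondDerivAt.sum Finset.univ fun i =>
      HasSecondDerivAt.sum Finset.univ fun j => hentry i j).const_mul (2 * M))
  have hnonneg := hderiv.nonneg_of_isLocalMin
    (.of_forall fun s => by simpa using h.le_heatOp_add (x + s • v, t) hp)
  simp only [zero_smul, add_zero, sub_self, sub_zero, zero_mul, ← Finset.mul_sum] at hnonneg
  linarith

end ConvexFlow

/-! ### Improving the Hessian bound -/

section HessianImprovement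

variable {E ι : Type*} [NormedAddCommGroup E] [InnerProductSpace ℝ E] [Fintype ι]
  {f : E × ℝ → ℝ} {M Θ : ℝ}

lemma spaceDeriv_le_of_growth (hf : PastSmooth f)
    (hconv : ∀ t < 0, ConvexOn ℝ univ fun x => f (x, t)) {c R : ℝ} (hc : 0 ≤ c)
    (hgrowth : ∀ q ∈ past E, |f q| ≤ c * ‖q.1‖ ^ 2 + R) {q : E × ℝ} (hq : q ∈ past E) {e : E}
    (he : ‖e‖ = 1) : ∂ₓ e f q ≤ 5 * c * ‖q.1‖ + (c + 2 * R) := by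
  obtain ⟨x, t⟩ := q
  have hx := norm_nonneg x
  have hR : 0 ≤ R := by
    simpa using (abs_nonneg _).trans (hgrowth (0, t) hq)
  have htangent := add_spaceDeriv_le_of_convexOn hf hq (hconv t hq) x ((‖x‖ + 1) • e)
  rw [spaceDeriv_smul] at htangent
  have hfar : ‖x + (‖x‖ + 1) • e‖ ≤ 2 * ‖x‖ + 1 := by
    refine (norm_add_le _ _).trans_eq ?_
    rw [norm_smul, he, Real.norm_of_nonneg (by positivity)]
    ring
  have hfar_sq : c * ‖x + (‖x‖ + 1) • e‖ ^ 2 ≤ c * (2 * ‖x‖ + 1) ^ 2 := by gcongr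
  refine le_of_mul_le_mul_left (a := ‖x‖ + 1) ?_ (by positivity)
  have h₀ := (abs_le.1 (hgrowth (x, t) hq)).1
  have h₁ := (abs_le.1 (hgrowth (x + (‖x‖ + 1) • e, t) hq)).2
  have : 0 ≤ c * ‖x‖ := by positivity
  have : 0 ≤ R * ‖x‖ := by positivity
  simp only at h₀ h₁ ⊢
  nlinarith

lemma sq_spaceDeriv_le_of_growth (hf : PastSmooth f)
    (hconv : ∀ t < 0, ConvexOn ℝ univ fun x => f (x, t)) {c R : ℝ} (hc : 0 ≤ c)
    (hgrowth : ∀ q ∈ past E, |f q| ≤ c * ‖q.1‖ ^ 2 + R) {q : E × ℝ} (hq : q ∈ past E) {e : E}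
    (he : ‖e‖ = 1) : ∂ₓ e f q ^ 2 ≤ 36 * c ^ 2 * ‖q.1‖ ^ 2 + 4 * (c + 2 * R) ^ 2 := by
  have hneg := spaceDeriv_le_of_growth hf hconv hc hgrowth hq (e := -e) (by simpa using he)
  have hpos := spaceDeriv_le_of_growth hf hconv hc hgrowth hq he
  rw [← neg_one_smul ℝ e, spaceDeriv_smul] at hneg
  calc ∂ₓ e f q ^ 2 ≤ (5 * c * ‖q.1‖ + (c + 2 * R)) ^ 2 := sq_le_sq' (by linarith) hpos
    _ ≤ 36 * c ^ 2 * ‖q.1‖ ^ 2 + 4 * (c + 2 * R) ^ 2 := by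
      nlinarith [sq_nonneg (11 * (c * ‖q.1‖) - 5 * (c + 2 * R)), sq_nonneg (c + 2 * R)]

lemma properSpace_of_orthonormalBasis (b : OrthonormalBasis ι ℝ E) : ProperSpace E :=
  have := b.toBasis.finiteDimensional_of_finite
  FiniteDimensional.proper_real E

lemma heatOp_nonneg_of_isMax {g h : E × ℝ → ℝ} (hg : PastSmooth g) (hh : PastSmooth h)
    (b : OrthonormalBasis ι ℝ E) {γ : ι → ℝ} (hγ : ∀ i, 0 ≤ γ i) {x : E} {t A B σ : ℝ}
    (ht : t < 0)
    (hmax : ∀ q : E × ℝ, q.2 ≤ t → g q + B * h q ^ 2 - A * ‖q.1‖ ^ 2 + σ * q.2 ≤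
      g (x, t) + B * h (x, t) ^ 2 - A * ‖x‖ ^ 2 + σ * t) :
    2 * B * ∑ i, γ i * ∂ₓ (b i) h (x, t) ^ 2 ≤ heatOp b γ g (x, t) +
      2 * B * h (x, t) * heatOp b γ h (x, t) + 2 * A * ∑ i, γ i + σ := by
  have htime : 0 ≤ ∂ₜ g (x, t) + B * (2 * h (x, t) * ∂ₜ h (x, t)) + σ := by
    have hderiv := (((hg.hasDerivAt_time x ht).fun_add
      (((hh.hasDerivAt_time x ht).fun_pow 2).const_mul B)).sub_const (A * ‖x‖ ^ 2)).fun_add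
      ((hasDerivAt_id t).const_mul σ)
    simpa using deriv_nonneg_of_le_on_left hderiv fun r hr => hmax (x, r) hr
  have hspace (i : ι) : ∂ₓ (b i) (∂ₓ (b i) g) (x, t) +
      B * (2 * (∂ₓ (b i) h (x, t) ^ 2 + h (x, t) * ∂ₓ (b i) (∂ₓ (b i) h) (x, t))) -
      A * 2 ≤ 0 := by
    have hderiv := (((hg.hasSecondDerivAt_line x (b i) ht).add
      ((hh.hasSecondDerivAt_line x (b i) ht).sq.const_mul B)).sub
      ((hasSecondDerivAt_norm_sq x (b i)).const_mul A)).add (.const (σ * t))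
    simpa using hderiv.nonpos_of_isLocalMax
      (.of_forall fun s => by simpa using hmax (x + s • b i, t) le_rfl)
  have hsum := Finset.sum_nonpos (s := Finset.univ) fun i _ =>
    mul_nonpos_of_nonneg_of_nonpos (hγ i) (hspace i)
  have hsplit : ∑ i, γ i * (∂ₓ (b i) (∂ₓ (b i) g) (x, t) +
      B * (2 * (∂ₓ (b i) h (x, t) ^ 2 + h (x, t) * ∂ₓ (b i) (∂ₓ (b i) h) (x, t))) - A * 2) =
      ∑ i, γ i * ∂ₓ (b i) (∂ₓ (b i) g) (x, t) + 2 * B * ∑ i, γ i * ∂ₓ (b i) h (x, t) ^ 2 +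
      2 * B * h (x, t) * ∑ i, γ i * ∂ₓ (b i) (∂ₓ (b i) h) (x, t) - 2 * A * ∑ i, γ i := by
    simp only [Finset.mul_sum, ← Finset.sum_add_distrib, ← Finset.sum_sub_distrib]
    exact Finset.sum_congr rfl fun i _ => by ring
  simp only [heatOp]
  linarith

lemma IsLinearizationAt.sq_spaceDeriv₂_le {p : E × ℝ} {b : OrthonormalBasis ι ℝ E} {γ : ι → ℝ}
    (h : IsLinearizationAt f M p b γ) (hf : PastSmooth f) (hp : p ∈ past E) {e : E}
    (he : ‖e‖ = 1) :
    ∂ₓ e (∂ₓ e f) p ^ 2 ≤ (1 + M ^ 2) * ∑ i, γ i * ∂ₓ (b i) (∂ₓ e f) p ^ 2 := by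
  calc ∂ₓ e (∂ₓ e f) p ^ 2
      = (∑ i, inner ℝ (b i) e * ∂ₓ (b i) (∂ₓ e f) p) ^ 2 := by
        simp only [← spaceHessian_apply hf hp]
        rw [← LinearMap.BilinForm.flip_apply, ← sum_inner_mul_apply b]
        rfl
    _ ≤ (∑ i, inner ℝ (b i) e ^ 2) * ∑ i, ∂ₓ (b i) (∂ₓ e f) p ^ 2 :=
        Finset.sum_mul_sq_le_sq_mul_sq _ _ _
    _ = ∑ i, ∂ₓ (b i) (∂ₓ e f) p ^ 2 := by
        have hunit := b.sum_sq_norm_inner_right e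
        simp only [Real.norm_eq_abs, sq_abs, he, one_pow] at hunit
        rw [hunit, one_mul]
    _ ≤ ∑ i, (1 + M ^ 2) * (γ i * ∂ₓ (b i) (∂ₓ e f) p ^ 2) := by
        refine Finset.sum_le_sum fun i _ => ?_
        have hγ := (div_le_iff₀' (by positivity)).1 (h.le_coeff i)
        rw [← mul_assoc]
        exact le_mul_of_one_le_left (sq_nonneg _) hγ
    _ = _ := (Finset.mul_sum _ _ _).symm

lemma IsLinearizationAt.coeff_nonneg {p : E × ℝ} {b : OrthonormalBasis ι ℝ E} {γ : ι → ℝ}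
    (h : IsLinearizationAt f M p b γ) (i : ι) : 0 ≤ γ i :=
  le_trans (by positivity) (h.le_coeff i)

lemma IsLinearizationAt.sum_coeff_le_card {p : E × ℝ} {b : OrthonormalBasis ι ℝ E} {γ : ι → ℝ}
    (h : IsLinearizationAt f M p b γ) : ∑ i, γ i ≤ Fintype.card ι := by
  simpa using Finset.sum_le_sum fun i (_ : i ∈ Finset.univ) => h.coeff_le_one i

lemma spaceDeriv₂_le_sqrt_of_isMax (hf : PastSmooth f) {x : E} {t A B σ L : ℝ}
    {b : OrthonormalBasis ι ℝ E} {γ : ι → ℝ} (hlin : IsLinearizationAt f M (x, t) b γ)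
    (ht : t < 0) {e : E} (he : ‖e‖ = 1) (hA : 0 ≤ A) (hB : 0 < B)
    (hL : 2 * A * Fintype.card ι + σ ≤ 2 * B * L)
    (hmax : ∀ q : E × ℝ, q.2 ≤ t →
      ∂ₓ e (∂ₓ e f) q + B * ∂ₓ e f q ^ 2 - A * ‖q.1‖ ^ 2 + σ * q.2 ≤
        ∂ₓ e (∂ₓ e f) (x, t) + B * ∂ₓ e f (x, t) ^ 2 - A * ‖x‖ ^ 2 + σ * t) :
    ∂ₓ e (∂ₓ e f) (x, t) ≤ √((1 + M ^ 2) * L) := by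
  have hheat := heatOp_nonneg_of_isMax (hf.spaceDeriv₂ e e) (hf.dirDeriv (e, 0)) b
    hlin.coeff_nonneg ht hmax
  rw [hlin.heatOp_spaceDeriv_eq_zero hf ht, mul_zero] at hheat
  have hcoeff : 2 * A * ∑ i, γ i ≤ 2 * A * Fintype.card ι := by
    gcongr
    exact hlin.sum_coeff_le_card
  have henergy : ∑ i, γ i * ∂ₓ (b i) (∂ₓ e f) (x, t) ^ 2 ≤ L :=
    le_of_mul_le_mul_left (a := 2 * B)
      (by linarith [hlin.heatOp_spaceDeriv₂_nonpos hf ht e]) (by positivity)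
  exact Real.le_sqrt_of_sq_le ((hlin.sq_spaceDeriv₂_le hf ht he).trans (by gcongr))

lemma IsConvexFlow.spaceDeriv₂_le_sqrt_add (hf : IsConvexFlow ι Θ f) (hM : HessianLE f M)
    {e : E} (he : ‖e‖ = 1) {a η K L : ℝ} (ha : 0 ≤ a) (hη : 0 < η)
    (hL : (a + η) * Fintype.card ι + η ≤ L)
    (hgrad : ∀ q ∈ past E, ∂ₓ e f q ^ 2 ≤ a * ‖q.1‖ ^ 2 + K) {p : E × ℝ} (hp : p ∈ past E)
    {B : ℝ} (hB : 0 < B) :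
    ∂ₓ e (∂ₓ e f) p ≤ √((1 + M ^ 2) * L) + B * (K + (a + η) * ‖p.1‖ ^ 2) := by
  obtain ⟨b, -⟩ := hf.equation p hp
  have := properSpace_of_orthonormalBasis b
  have hpast : {q : E × ℝ | q.2 ≤ p.2} ⊆ past E := fun q (hq : q.2 ≤ p.2) =>
    show q.2 < 0 from hq.trans_lt hp
  let Ψ : E × ℝ → ℝ := fun q =>
    ∂ₓ e (∂ₓ e f) q + B * ∂ₓ e f q ^ 2 - (a + η) * B * ‖q.1‖ ^ 2 + 2 * η * B * q.2
  have hcont : ContinuousOn Ψ {q | q.2 ≤ p.2} := by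
    have h₂ := (hf.smooth.spaceDeriv₂ e e).continuousOn.mono hpast
    have h₁ := (hf.smooth.dirDeriv (e, 0)).continuousOn.mono hpast
    fun_prop
  obtain ⟨⟨x, t⟩, ht, hmax⟩ := exists_isMaxOn_slab (C := M + B * K) (ε := η * B)
    (s := 2 * η * B) (by positivity) (by positivity) hcont (fun q hq => by
      have hsq := mul_le_mul_of_nonneg_left (hgrad q (hpast hq)) hB.le
      simp only [Ψ]
      linarith [hM q (hpast hq) e he])
  have ht₀ : t < 0 := hpast ht
  obtain ⟨b, γ, hlin⟩ := hf.exists_isLinearizationAt hM (p := (x, t)) ht₀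
  have hroot := spaceDeriv₂_le_sqrt_of_isMax hf.smooth hlin ht₀ he (A := (a + η) * B)
    (σ := 2 * η * B) (L := L) (by positivity) hB (by nlinarith)
    fun q hq => hmax q (hq.trans ht)
  have hpoint := hmax p le_rfl
  have hsq := mul_le_mul_of_nonneg_left (hgrad (x, t) ht₀) hB.le
  have htime : 2 * η * B * t ≤ 2 * η * B * p.2 := by gcongr
  have hpos₁ : 0 ≤ B * ∂ₓ e f p ^ 2 := by positivity
  have hpos₂ : 0 ≤ η * B * ‖x‖ ^ 2 := by positivity
  simp only [Ψ] at hpoint hsq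
  linarith

lemma IsConvexFlow.spaceDeriv₂_le_sqrt (hf : IsConvexFlow ι Θ f) (hM : HessianLE f M)
    {e : E} (he : ‖e‖ = 1) {a K L : ℝ} (ha : 0 ≤ a) (hL : Fintype.card ι * a < L)
    (hgrad : ∀ q ∈ past E, ∂ₓ e f q ^ 2 ≤ a * ‖q.1‖ ^ 2 + K) {p : E × ℝ} (hp : p ∈ past E) :
    ∂ₓ e (∂ₓ e f) p ≤ √((1 + M ^ 2) * L) := by
  set η := (L - Fintype.card ι * a) / (Fintype.card ι + 1)
  have hη : 0 < η := div_pos (by linarith) (by positivity)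
  have hηL : (a + η) * Fintype.card ι + η ≤ L := by
    have : η * (Fintype.card ι + 1) = L - Fintype.card ι * a :=
      div_mul_cancel₀ _ (by positivity)
    linarith
  have hlim : Tendsto (fun B : ℝ => √((1 + M ^ 2) * L) + B * (K + (a + η) * ‖p.1‖ ^ 2))
      (𝓝[>] 0) (𝓝 √((1 + M ^ 2) * L)) :=
    ((by fun_prop : Continuous _).tendsto' 0 _ (by simp)).mono_left nhdsWithin_le_nhds
  refine ge_of_tendsto hlim ?_
  filter_upwards [self_mem_nhdsWithin] with B hB
  exact hf.spaceDeriv₂_le_sqrt_add hM he ha hη hηL hgrad hp hB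

-- The least Hessian bound `M` satisfies `M ^ 2 ≤ (1 + M ^ 2) * L` with `L = 1 / (15 n + 1)`.
lemma IsConvexFlow.exists_small_hessianLE (hf : IsConvexFlow ι Θ f) {C : ℝ} (hC : HessianLE f C)
    {a K : ℝ} (ha : 0 ≤ a) (hsmall : Fintype.card ι * (15 * Fintype.card ι + 1) * a < 1)
    (hgrad : ∀ q ∈ past E, ∀ e : E, ‖e‖ = 1 → ∂ₓ e f q ^ 2 ≤ a * ‖q.1‖ ^ 2 + K) :
    ∃ M : ℝ, 0 ≤ M ∧ 15 * Fintype.card ι * M ^ 2 ≤ 1 ∧ HessianLE f M := by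
  set n : ℝ := (Fintype.card ι : ℝ)
  have hn : 0 ≤ n := Nat.cast_nonneg _
  set S : Set ℝ := {r | ∃ q ∈ past E, ∃ v, ‖v‖ = 1 ∧ ∂ₓ v (∂ₓ v f) q = r}
  have hS : HessianLE f (sSup S) := fun q hq v hv =>
    le_csSup ⟨C, by rintro r ⟨q, hq, v, hv, rfl⟩; exact hC q hq v hv⟩ ⟨q, hq, v, hv, rfl⟩
  have hS₀ : 0 ≤ sSup S := Real.sSup_nonneg fun r ⟨q, hq, v, _, hr⟩ =>
    hr ▸ hf.spaceDeriv₂_nonneg hq v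
  have hL : n * a < 1 / (15 * n + 1) := by
    rw [lt_div_iff₀ (by positivity)]
    linarith
  have hroot : sSup S ≤ √((1 + sSup S ^ 2) * (1 / (15 * n + 1))) := by
    refine Real.sSup_le ?_ (Real.sqrt_nonneg _)
    rintro r ⟨q, hq, v, hv, rfl⟩
    exact hf.spaceDeriv₂_le_sqrt hS hv ha hL (fun q hq => hgrad q hq v hv) hq
  have hsq := (Real.le_sqrt hS₀ (by positivity)).1 hroot
  rw [mul_one_div, le_div_iff₀ (by positivity)] at hsq
  exact ⟨sSup S, hS₀, by linarith, hS⟩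

end HessianImprovement

/-! ### Doubling of variables -/

section WeightedTrace

open LinearMap (BilinForm)

variable {E ι : Type*} [NormedAddCommGroup E] [InnerProductSpace ℝ E] [Fintype ι]

lemma sum_coeff_mul_le {g G γ : ι → ℝ} {κ μ X : ℝ} (hg : ∀ i, 0 ≤ g i) (hX : 0 ≤ X)
    (hG : ∀ i, 2 * g i + G i ≤ X) (hγ : ∀ i, γ i ∈ Icc (1 - μ) 1) (hμ : μ ≤ κ) :
    2 * (κ - μ) * ∑ i, g i + ∑ i, γ i * G i ≤
      (1 - κ) * ∑ i, G i + Fintype.card ι * (κ * X) := by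
  have hterm (i : ι) : 2 * (κ - μ) * g i + γ i * G i ≤ (1 - κ) * G i + κ * X := by
    obtain ⟨hlower, hupper⟩ := hγ i
    have hG' := mul_le_mul_of_nonneg_left (hG i) (by linarith : 0 ≤ γ i - (1 - κ))
    have hg' := mul_nonneg (by linarith : 0 ≤ γ i - (1 - μ)) (hg i)
    have hX' := mul_nonneg (by linarith : 0 ≤ 1 - γ i) hX
    linarith
  simpa [Finset.sum_add_distrib, ← Finset.mul_sum] using
    Finset.sum_le_sum fun i (_ : i ∈ Finset.univ) => hterm i

lemma sub_reflection_orthogonal_singleton (z v : E) :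
    v - ((ℝ ∙ z)ᗮ).reflection v = (2 * inner ℝ z v / ‖z‖ ^ 2) • z := by
  rw [Submodule.reflection_orthogonal_apply, Submodule.reflection_singleton_apply]
  simp only [RCLike.ofReal_real_eq_id, id_eq, neg_sub, sub_sub_cancel, mul_div_assoc, mul_smul,
    two_smul]

lemma sum_diag_sub_sum_diag_le (b b' : OrthonormalBasis ι ℝ E) {G H : BilinForm ℝ E} {z : E}
    (hz : z ≠ 0) {P δ : ℝ}
    (h : ∀ v, ‖v‖ = 1 → G v v - H (((ℝ ∙ z)ᗮ).reflection v) (((ℝ ∙ z)ᗮ).reflection v) +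
      P * (inner ℝ z v ^ 2 / ‖z‖ ^ 2) ≤ δ) :
    ∑ i, G (b i) (b i) - ∑ i, H (b' i) (b' i) + P ≤ Fintype.card ι * δ := by
  have hnorm : ∑ i, inner ℝ z (b i) ^ 2 / ‖z‖ ^ 2 = 1 := by
    have := b.sum_sq_norm_inner_left z
    simp only [Real.norm_eq_abs, sq_abs] at this
    rw [← Finset.sum_div, this, div_self (by simpa using hz)]
  have hreflect := sum_bilinForm_diag_eq (b.map ((ℝ ∙ z)ᗮ).reflection) b' H
  have hsum := Finset.sum_le_sum fun i (_ : i ∈ Finset.univ) => h (b i) (b.norm_eq_one i)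
  simp only [OrthonormalBasis.map_apply] at hreflect
  simpa only [Finset.sum_add_distrib, Finset.sum_sub_distrib, ← Finset.mul_sum, hnorm, hreflect,
    mul_one, Finset.sum_const, Finset.card_univ, nsmul_eq_mul] using hsum

-- The reflection in `z` exchanges the two points of the doubled problem and yields the gain `P`;
-- the one-sided bounds pay for the deviation of `γ` and `γ'` from `1`.
lemma sum_coeff_diag_sub_le (b b' : OrthonormalBasis ι ℝ E) {G H : BilinForm ℝ E} {g h : E → ℝ}
    {z : E} (hz : z ≠ 0) {P ε κ μ : ℝ} {γ γ' : ι → ℝ} (hP : 0 ≤ P) (hε : 0 ≤ ε)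
    (hg : ∀ v, 0 ≤ g v) (hh : ∀ v, 0 ≤ h v)
    (hG : ∀ v, ‖v‖ = 1 → 2 * g v + G v v ≤ P / 2 + 2 * ε)
    (hH : ∀ v, ‖v‖ = 1 → 2 * h v - H v v ≤ P / 2 + 2 * ε)
    (hGH : ∀ v, ‖v‖ = 1 → G v v - H (((ℝ ∙ z)ᗮ).reflection v) (((ℝ ∙ z)ᗮ).reflection v) +
      P * (inner ℝ z v ^ 2 / ‖z‖ ^ 2) ≤ 4 * ε)
    (hγ : ∀ i, γ i ∈ Icc (1 - μ) 1) (hγ' : ∀ i, γ' i ∈ Icc (1 - μ) 1) (hμ : μ ≤ κ)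
    (hκ : κ * (3 * Fintype.card ι) = 1) :
    2 * (κ - μ) * (∑ i, g (b i) + ∑ i, h (b' i)) + (∑ i, γ i * G (b i) (b i) -
      ∑ i, γ' i * H (b' i) (b' i)) + P / 3 ≤ 6 * Fintype.card ι * ε := by
  have : Nonempty ι := nonempty_index_of_ne_zero b hz
  have hcard : (1 : ℝ) ≤ Fintype.card ι := by exact_mod_cast Fintype.card_pos
  have hκ₀ : 0 < κ := by
    by_contra! hneg
    nlinarith
  have hκ₁ : κ ≤ 1 / 3 := by nlinarith
  have hX : 0 ≤ P / 2 + 2 * ε := by positivity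
  have hsumG := sum_coeff_mul_le (fun i => hg (b i)) hX (fun i => hG _ (b.norm_eq_one i)) hγ hμ
  have hsumH := sum_coeff_mul_le (G := fun i => -H (b' i) (b' i)) (fun i => hh (b' i)) hX
    (fun i => hH _ (b'.norm_eq_one i)) hγ' hμ
  have hcardX : Fintype.card ι * (κ * (P / 2 + 2 * ε)) = (P / 2 + 2 * ε) / 3 := by
    linear_combination (P / 2 + 2 * ε) / 3 * hκ
  have htrace := mul_le_mul_of_nonneg_left (sum_diag_sub_sum_diag_le b b' hz hGH)
    (by linarith : 0 ≤ 1 - κ)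
  have hκP : κ * P ≤ P / 3 := by nlinarith
  have hκε : 0 ≤ κ * (Fintype.card ι * (4 * ε)) := by positivity
  have hεn : ε ≤ Fintype.card ι * ε := by nlinarith
  simp only [mul_neg, Finset.sum_neg_distrib] at hsumH
  linarith

end WeightedTrace

section Doubling

open LinearMap (BilinForm)

variable {E ι α : Type*} [NormedAddCommGroup E] [InnerProductSpace ℝ E] [Fintype ι] [Fintype α]
  {F : α → E × ℝ → ℝ} {f : E × ℝ → ℝ} {M N Θ ε t : ℝ} {x y : E} {p q : E × ℝ}

/-- The doubled functional: the squared oscillation of the family `F` between the points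
`z.1.1` and `z.1.2` at time `z.2`, penalized by the concave modulus `N * √‖x - y‖` and by a term
that makes it attain its maximum. -/
def doubled (F : α → E × ℝ → ℝ) (N ε : ℝ) (z : (E × E) × ℝ) : ℝ :=
  ∑ a, (F a (z.1.1, z.2) - F a (z.1.2, z.2)) ^ 2 - N * √‖z.1.1 - z.1.2‖ -
    ε * (‖z.1.1‖ ^ 2 + ‖z.1.2‖ ^ 2 - z.2)

/-- The Hessian at `p` of the family `F`, contracted with the derivatives `2 * (F a x - F a y)` of
the squared oscillation. -/
def oscHessian (F : α → E × ℝ → ℝ) (x y : E) (t : ℝ) (p : E × ℝ) : BilinForm ℝ E :=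
  ∑ a, (2 * (F a (x, t) - F a (y, t))) • spaceHessian (F a) p

lemma oscHessian_apply_self (hF : ∀ a, PastSmooth (F a)) (hp : p ∈ past E) (v : E) :
    oscHessian F x y t p v v =
      ∑ a, 2 * (F a (x, t) - F a (y, t)) * ∂ₓ v (∂ₓ v (F a)) p := by
  simp only [oscHessian, LinearMap.sum_apply, LinearMap.smul_apply, smul_eq_mul,
    spaceHessian_apply (hF _) hp]

lemma sum_mul_heatOp_eq (hF : ∀ a, PastSmooth (F a)) (hp : p ∈ past E) (b : ι → E) (γ : ι → ℝ) :
    ∑ a, 2 * (F a (x, t) - F a (y, t)) * heatOp b γ (F a) p =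
      ∑ a, 2 * (F a (x, t) - F a (y, t)) * ∂ₜ (F a) p -
        ∑ i, γ i * oscHessian F x y t p (b i) (b i) := by
  simp only [heatOp, oscHessian_apply_self hF hp, mul_sub, Finset.sum_sub_distrib,
    Finset.mul_sum]
  rw [Finset.sum_comm]
  simp only [mul_left_comm]

lemma doubled_time_le (hF : ∀ a, PastSmooth (F a)) (ht : t < 0)
    (hmax : ∀ z : (E × E) × ℝ, z.2 ≤ t → doubled F N ε z ≤ doubled F N ε ((x, y), t)) :
    0 ≤ ∑ a, 2 * (F a (x, t) - F a (y, t)) * ∂ₜ (F a) (x, t) -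
      ∑ a, 2 * (F a (x, t) - F a (y, t)) * ∂ₜ (F a) (y, t) + ε := by
  have hosc := HasDerivAt.fun_sum (u := Finset.univ) fun a _ =>
    (((hF a).hasDerivAt_time x ht).fun_sub ((hF a).hasDerivAt_time y ht)).fun_pow 2
  have hpenalty := ((hasDerivAt_id t).const_sub (‖x‖ ^ 2 + ‖y‖ ^ 2)).const_mul ε
  have hderiv := (hosc.sub_const (N * √‖x - y‖)).fun_sub hpenalty
  have := deriv_nonneg_of_le_on_left hderiv fun r hr => hmax ((x, y), r) hr
  simpa [mul_sub, Finset.sum_sub_distrib] using this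

lemma doubled_space_le (hF : ∀ a, PastSmooth (F a)) (hxy : x ≠ y) (ht : t < 0)
    (hmax : ∀ z : (E × E) × ℝ, z.2 ≤ t → doubled F N ε z ≤ doubled F N ε ((x, y), t)) (v w : E) :
    2 * ∑ a, (∂ₓ v (F a) (x, t) - ∂ₓ w (F a) (y, t)) ^ 2 +
        (oscHessian F x y t (x, t) v v - oscHessian F x y t (y, t) w w) ≤
      N / √‖x - y‖ ^ 3 * (‖v - w‖ ^ 2 / 2 - 3 / 4 * (inner ℝ (x - y) (v - w) ^ 2 / ‖x - y‖ ^ 2)) +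
        2 * ε * (‖v‖ ^ 2 + ‖w‖ ^ 2) := by
  have hosc := HasSecondDerivAt.sum Finset.univ fun a =>
    (((hF a).hasSecondDerivAt_line x v ht).sub ((hF a).hasSecondDerivAt_line y w ht)).sq
  have hmodulus := (hasSecondDerivAt_sqrt_norm (sub_ne_zero.2 hxy) (v - w)).const_mul N
  have hpenalty := (((hasSecondDerivAt_norm_sq x v).add (hasSecondDerivAt_norm_sq y w)).sub
    (.const t)).const_mul ε
  have hsecond := ((hosc.sub hmodulus).sub hpenalty).nonpos_of_isLocalMax (.of_forall fun s => by
    have := hmax ((x + s • v, y + s • w), t) le_rfl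
    simpa only [doubled, add_sub_add_comm, ← smul_sub, zero_smul, add_zero] using this)
  rw [oscHessian_apply_self hF (p := (x, t)) ht, oscHessian_apply_self hF (p := (y, t)) ht,
    ← Finset.sum_sub_distrib, Finset.mul_sum, ← Finset.sum_add_distrib]
  have hsum : ∑ a, (2 * (∂ₓ v (F a) (x, t) - ∂ₓ w (F a) (y, t)) ^ 2 +
      (2 * (F a (x, t) - F a (y, t)) * ∂ₓ v (∂ₓ v (F a)) (x, t) -
        2 * (F a (x, t) - F a (y, t)) * ∂ₓ w (∂ₓ w (F a)) (y, t))) =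
      ∑ a, 2 * ((∂ₓ v (F a) (x, t) - ∂ₓ w (F a) (y, t)) ^ 2 + (F a (x, t) - F a (y, t)) *
        (∂ₓ v (∂ₓ v (F a)) (x, t) - ∂ₓ w (∂ₓ w (F a)) (y, t))) :=
    Finset.sum_congr rfl fun a _ => by ring
  simp only [zero_smul, add_zero, sub_zero] at hsecond
  rw [hsum, div_mul_eq_mul_div, mul_div_assoc]
  linarith

-- Varying one point at a time bounds the Hessians from one side; varying both, reflected in
-- `x - y`, picks up the strict concavity of the modulus.
lemma doubled_second_order (hF : ∀ a, PastSmooth (F a)) (hxy : x ≠ y) (ht : t < 0)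
    (hN : 0 ≤ N) (hε : 0 ≤ ε)
    (hmax : ∀ z : (E × E) × ℝ, z.2 ≤ t → doubled F N ε z ≤ doubled F N ε ((x, y), t))
    (b b' : OrthonormalBasis ι ℝ E) {γ γ' : ι → ℝ} {κ μ : ℝ} (hγ : ∀ i, γ i ∈ Icc (1 - μ) 1)
    (hγ' : ∀ i, γ' i ∈ Icc (1 - μ) 1) (hμ : μ ≤ κ) (hκ : κ * (3 * Fintype.card ι) = 1) :
    2 * (κ - μ) * (∑ i, ∑ a, ∂ₓ (b i) (F a) (x, t) ^ 2 + ∑ i, ∑ a, ∂ₓ (b' i) (F a) (y, t) ^ 2) +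
      (∑ i, γ i * oscHessian F x y t (x, t) (b i) (b i) -
        ∑ i, γ' i * oscHessian F x y t (y, t) (b' i) (b' i)) + N / √‖x - y‖ ^ 3 / 3 ≤
      6 * Fintype.card ι * ε := by
  have hz : x - y ≠ 0 := sub_ne_zero.2 hxy
  have hzero (p : E × ℝ) (a : α) : ∂ₓ 0 (F a) p = 0 := by simpa using spaceDeriv_smul (F a) p 0 0
  have hspace := doubled_space_le hF hxy ht hmax
  have hradial (v : E) : 0 ≤ N / √‖x - y‖ ^ 3 * (inner ℝ (x - y) v ^ 2 / ‖x - y‖ ^ 2) := by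
    positivity
  refine sum_coeff_diag_sub_le b b' (g := fun v => ∑ a, ∂ₓ v (F a) (x, t) ^ 2)
    (h := fun v => ∑ a, ∂ₓ v (F a) (y, t) ^ 2) hz (by positivity) hε
    (fun v => by positivity) (fun v => by positivity)
    (fun v hv => ?_) (fun v hv => ?_) (fun v hv => ?_) hγ hγ' hμ hκ
  · have := hspace v 0
    simp only [hzero, sub_zero, hv, norm_zero, map_zero] at this
    linarith [hradial v]
  · have := hspace 0 v
    simp only [hzero, zero_sub, hv, norm_zero, norm_neg, inner_neg_right, neg_sq,
      map_zero] at this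
    linarith [hradial v]
  · have hreflect := hspace v (((ℝ ∙ (x - y))ᗮ).reflection v)
    rw [sub_reflection_orthogonal_singleton, norm_smul, inner_smul_right,
      real_inner_self_eq_norm_sq, LinearIsometryEquiv.norm_map, hv, Real.norm_eq_abs, mul_pow,
      sq_abs] at hreflect
    have hmodulus (r i : ℝ) (hr : r ≠ 0) : (2 * i / r ^ 2) ^ 2 * r ^ 2 / 2 -
        3 / 4 * ((2 * i / r ^ 2 * r ^ 2) ^ 2 / r ^ 2) = -(i ^ 2 / r ^ 2) := by
      field_simp
      ring
    rw [hmodulus _ _ (norm_ne_zero_iff.2 hz)] at hreflect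
    have hsq : 0 ≤ ∑ a, (∂ₓ v (F a) (x, t) -
      ∂ₓ (((ℝ ∙ (x - y))ᗮ).reflection v) (F a) (y, t)) ^ 2 := by positivity
    linarith

/-- The entries of the spatial Hessian of `f` in the frame `o`. -/
def hessianEntry {β : Type*} (f : E × ℝ → ℝ) (o : β → E) (a : β × β) : E × ℝ → ℝ :=
  ∂ₓ (o a.1) (∂ₓ (o a.2) f)

lemma pastSmooth_hessianEntry {β : Type*} (hf : PastSmooth f) (o : β → E) (a : β × β) :
    PastSmooth (hessianEntry f o a) :=
  hf.spaceDeriv₂ _ _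

lemma IsConvexFlow.sum_hessian_sub_mul_le (hf : IsConvexFlow ι Θ f) (hM : HessianLE f M)
    (o : OrthonormalBasis ι ℝ E) (hp : p ∈ past E) (hq : q ∈ past E) {B : BilinForm ℝ E}
    (hB : ∀ v, 0 ≤ B v v) :
    ∑ a, (hessianEntry f o a p - hessianEntry f o a q) * B (o a.1) (o a.2) ≤
      M * ∑ i, B (o i) (o i) := by
  have hV (v w : E) : (spaceHessian f p - spaceHessian f q) v w =
      ∂ₓ v (∂ₓ w f) p - ∂ₓ v (∂ₓ w f) q := by
    simp only [LinearMap.sub_apply, spaceHessian_apply hf.smooth hp,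
      spaceHessian_apply hf.smooth hq]
  have hsymm : (spaceHessian f p - spaceHessian f q).IsSymm :=
    (isSymm_spaceHessian hf.smooth hp).sub (isSymm_spaceHessian hf.smooth hq)
  have := sum_mul_bilinForm_le o hsymm (M := M) (fun v hv => by
    rw [hV]
    linarith [hM p hp v hv, hf.spaceDeriv₂_nonneg hq v]) hB
  simpa only [hessianEntry, Fintype.sum_prod_type, hV] using this

lemma IsConvexFlow.sum_sq_hessian_sub_le (hf : IsConvexFlow ι Θ f) (hM₀ : 0 ≤ M)
    (hM : HessianLE f M) (o : OrthonormalBasis ι ℝ E) (hp : p ∈ past E) (hq : q ∈ past E) :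
    ∑ a, (hessianEntry f o a p - hessianEntry f o a q) ^ 2 ≤ 2 * Fintype.card ι * M ^ 2 := by
  have hhalf {p q : E × ℝ} (hp : p ∈ past E) (hq : q ∈ past E) :
      ∑ a, (hessianEntry f o a p - hessianEntry f o a q) * hessianEntry f o a p ≤
        M * ∑ _i : ι, M := by
    have := hf.sum_hessian_sub_mul_le hM o hp hq (B := spaceHessian f p) fun v => by
      rw [spaceHessian_apply hf.smooth hp]
      exact hf.spaceDeriv₂_nonneg hp v
    simp only [spaceHessian_apply hf.smooth hp] at this
    refine this.trans ?_
    gcongr with i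
    exact hM p hp _ (o.norm_eq_one i)
  calc ∑ a, (hessianEntry f o a p - hessianEntry f o a q) ^ 2
      = ∑ a, (hessianEntry f o a p - hessianEntry f o a q) * hessianEntry f o a p +
        ∑ a, (hessianEntry f o a q - hessianEntry f o a p) * hessianEntry f o a q := by
        rw [← Finset.sum_add_distrib]
        exact Finset.sum_congr rfl fun a _ => by ring
    _ ≤ M * ∑ _i : ι, M + M * ∑ _i : ι, M := add_le_add (hhalf hp hq) (hhalf hq hp)
    _ = 2 * Fintype.card ι * M ^ 2 := by
        rw [Finset.sum_const, Finset.card_univ, nsmul_eq_mul]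
        ring

lemma IsConvexFlow.sum_mul_heatOp_le (hf : IsConvexFlow ι Θ f) (hM₀ : 0 ≤ M) (hM : HessianLE f M)
    (o : OrthonormalBasis ι ℝ E) {b : OrthonormalBasis ι ℝ E} {γ : ι → ℝ}
    (hlin : IsLinearizationAt f M p b γ) (hp : p ∈ past E) (hq : q ∈ past E) :
    ∑ a, 2 * (hessianEntry f o a p - hessianEntry f o a q) * heatOp b γ (hessianEntry f o a) p ≤
      8 * M ^ 2 * ∑ i, ∑ a, ∂ₓ (b i) (hessianEntry f o a) p ^ 2 := by
  have hB (v w : E) : (-spaceHessian (heatOp b γ f) p) v w = -heatOp b γ (∂ₓ v (∂ₓ w f)) p := by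
    simp only [LinearMap.neg_apply, spaceHessian_heatOp hf.smooth hp]
  have hpair := hf.sum_hessian_sub_mul_le hM o hq hp (B := -spaceHessian (heatOp b γ f) p)
    fun v => by
      rw [hB]
      linarith [hlin.heatOp_spaceDeriv₂_nonpos hf.smooth hp v]
  have hframe : ∑ k, ∑ i, ∑ j, ∂ₓ (o k) (∂ₓ (o i) (∂ₓ (o j) f)) p ^ 2 =
      ∑ k, ∑ a, ∂ₓ (b k) (hessianEntry f o a) p ^ 2 := by
    simp only [← Fintype.sum_prod_type' (f := fun i j => ∂ₓ _ (∂ₓ (o i) (∂ₓ (o j) f)) p ^ 2)]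
    rw [Finset.sum_comm, Finset.sum_comm (s := Finset.univ (α := ι))]
    exact Finset.sum_congr rfl fun a _ => sum_sq_linearMap_eq o b
      ((fderiv ℝ (hessianEntry f o a) p).comp (.inl ℝ E ℝ)).toLinearMap
  have htrace : ∑ k, (-spaceHessian (heatOp b γ f) p) (o k) (o k) ≤
      4 * M * ∑ k, ∑ a, ∂ₓ (b k) (hessianEntry f o a) p ^ 2 := by
    rw [← hframe, Finset.mul_sum]
    refine Finset.sum_le_sum fun k _ => ?_
    rw [hB]
    linarith [hlin.le_heatOp_spaceDeriv₂ hf.smooth hp o (o k)]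
  calc ∑ a, 2 * (hessianEntry f o a p - hessianEntry f o a q) *
        heatOp b γ (hessianEntry f o a) p
      = 2 * ∑ a, (hessianEntry f o a q - hessianEntry f o a p) *
          (-spaceHessian (heatOp b γ f) p) (o a.1) (o a.2) := by
        rw [Finset.mul_sum]
        exact Finset.sum_congr rfl fun a _ => by rw [hB, hessianEntry]; ring
    _ ≤ 2 * (M * (4 * M * ∑ i, ∑ a, ∂ₓ (b i) (hessianEntry f o a) p ^ 2)) := by
        gcongr
        exact hpair.trans (by gcongr)
    _ = _ := by ring

lemma IsLinearizationAt.coeff_mem_Icc {b : OrthonormalBasis ι ℝ E} {γ : ι → ℝ}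
    (h : IsLinearizationAt f M p b γ) (i : ι) : γ i ∈ Icc (1 - M ^ 2) 1 := by
  refine ⟨le_trans ?_ (h.le_coeff i), h.coeff_le_one i⟩
  rw [le_div_iff₀ (by positivity)]
  nlinarith [sq_nonneg (M ^ 2)]

lemma IsConvexFlow.modulus_le_of_doubled_isMax (hf : IsConvexFlow ι Θ f) (hM₀ : 0 ≤ M)
    (hM : HessianLE f M) (hMn : 15 * Fintype.card ι * M ^ 2 ≤ 1) (o : OrthonormalBasis ι ℝ E)
    (hxy : x ≠ y) (ht : t < 0) (hN : 0 ≤ N) (hε : 0 ≤ ε)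
    (hmax : ∀ z : (E × E) × ℝ, z.2 ≤ t →
      doubled (hessianEntry f o) N ε z ≤ doubled (hessianEntry f o) N ε ((x, y), t)) :
    N / √‖x - y‖ ^ 3 / 3 ≤ (6 * Fintype.card ι + 1) * ε := by
  have hsmooth := pastSmooth_hessianEntry hf.smooth o
  obtain ⟨b, γ, hlin⟩ := hf.exists_isLinearizationAt hM (p := (x, t)) ht
  obtain ⟨b', γ', hlin'⟩ := hf.exists_isLinearizationAt hM (p := (y, t)) ht
  have : Nonempty ι := nonempty_index_of_ne_zero o (sub_ne_zero.2 hxy)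
  have hcard : (0 : ℝ) < Fintype.card ι := by exact_mod_cast Fintype.card_pos
  set κ : ℝ := 1 / (3 * Fintype.card ι)
  have hκ : κ * (3 * Fintype.card ι) = 1 := div_mul_cancel₀ _ (by positivity)
  have hMκ : 5 * M ^ 2 ≤ κ := by
    rw [le_div_iff₀ (by positivity)]
    linarith
  have hspace := doubled_second_order hsmooth hxy ht hN hε hmax b b' hlin.coeff_mem_Icc
    hlin'.coeff_mem_Icc (by linarith [sq_nonneg M]) hκ
  have htime := doubled_time_le hsmooth ht hmax
  have hreact := hf.sum_mul_heatOp_le hM₀ hM o hlin (q := (y, t)) ht ht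
  have hreact' := hf.sum_mul_heatOp_le hM₀ hM o hlin' (q := (x, t)) ht ht
  have hswap : ∑ a, 2 * (hessianEntry f o a (y, t) - hessianEntry f o a (x, t)) *
      heatOp b' γ' (hessianEntry f o a) (y, t) =
      -∑ a, 2 * (hessianEntry f o a (x, t) - hessianEntry f o a (y, t)) *
        heatOp b' γ' (hessianEntry f o a) (y, t) := by
    rw [← Finset.sum_neg_distrib]
    exact Finset.sum_congr rfl fun a _ => by ring
  rw [sum_mul_heatOp_eq hsmooth (p := (x, t)) ht] at hreact
  rw [hswap, sum_mul_heatOp_eq hsmooth (p := (y, t)) ht] at hreact'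
  have habsorb : 0 ≤ (κ - 5 * M ^ 2) *
      (∑ i, ∑ a, ∂ₓ (b i) (hessianEntry f o a) (x, t) ^ 2 +
        ∑ i, ∑ a, ∂ₓ (b' i) (hessianEntry f o a) (y, t) ^ 2) :=
    mul_nonneg (by linarith) (by positivity)
  linarith

lemma exists_doubled_isMax [ProperSpace E] (hF : ∀ a, PastSmooth (F a)) (ht : t < 0) {Q : ℝ}
    (hQ : ∀ x y : E, ∀ s ≤ t, ∑ a, (F a (x, s) - F a (y, s)) ^ 2 ≤ Q) (hN : 0 ≤ N) (hε : 0 < ε) :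
    ∃ z : (E × E) × ℝ, z.2 ≤ t ∧ ∀ w, w.2 ≤ t → doubled F N ε w ≤ doubled F N ε z := by
  refine exists_isMaxOn_slab (C := Q) hε hε ?_ fun z hz => ?_
  · have hpast : MapsTo (fun z : (E × E) × ℝ => (z.1.1, z.2)) {z | z.2 ≤ t} (past E) ∧
        MapsTo (fun z : (E × E) × ℝ => (z.1.2, z.2)) {z | z.2 ≤ t} (past E) :=
      ⟨fun z hz => lt_of_le_of_lt hz ht, fun z hz => lt_of_le_of_lt hz ht⟩
    have hosc : ContinuousOn (fun z : (E × E) × ℝ =>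
        ∑ a, (F a (z.1.1, z.2) - F a (z.1.2, z.2)) ^ 2) {z | z.2 ≤ t} :=
      continuousOn_finsetSum _ fun a _ =>
        (((hF a).continuousOn.comp (by fun_prop) hpast.1).sub
          ((hF a).continuousOn.comp (by fun_prop) hpast.2)).pow 2
    exact (hosc.sub (by fun_prop)).sub (by fun_prop)
  · have hnorm : ‖z.1‖ ^ 2 ≤ ‖z.1.1‖ ^ 2 + ‖z.1.2‖ ^ 2 := by
      rcases max_choice ‖z.1.1‖ ‖z.1.2‖ with h | h <;> rw [Prod.norm_def, h] <;> nlinarith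
    have hmodulus : 0 ≤ N * √‖z.1.1 - z.1.2‖ := by positivity
    have := mul_le_mul_of_nonneg_left hnorm hε.le
    simp only [doubled]
    linarith [hQ z.1.1 z.1.2 z.2 hz]

lemma IsConvexFlow.pow_four_le_of_doubled_pos (hf : IsConvexFlow ι Θ f) (hM₀ : 0 ≤ M)
    (hM : HessianLE f M) (hMn : 15 * Fintype.card ι * M ^ 2 ≤ 1) (o : OrthonormalBasis ι ℝ E)
    (ht : t < 0) (hN : 0 ≤ N) (hε : 0 < ε)
    (hpos : 0 < doubled (hessianEntry f o) N ε ((x, y), t)) :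
    N ^ 4 ≤ 3 * ((6 * Fintype.card ι + 1) * ε) * (2 * Fintype.card ι * M ^ 2) ^ 3 := by
  have := properSpace_of_orthonormalBasis o
  have hosc (x y : E) (s : ℝ) (hs : s ≤ t) := hf.sum_sq_hessian_sub_le hM₀ hM o
    (p := (x, s)) (q := (y, s)) (hs.trans_lt ht) (hs.trans_lt ht)
  obtain ⟨⟨⟨x', y'⟩, s⟩, hs, hmax⟩ :=
    exists_doubled_isMax (pastSmooth_hessianEntry hf.smooth o) ht hosc hN hε
  have hs₀ : s < 0 := lt_of_le_of_lt hs ht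
  have hpos' := hpos.trans_le (hmax ((x, y), t) le_rfl)
  have hpenalty : 0 ≤ ε * (‖x'‖ ^ 2 + ‖y'‖ ^ 2 - s) :=
    mul_nonneg hε.le (sub_nonneg.2 (hs₀.le.trans (by positivity)))
  simp only [doubled] at hpos'
  have hxy : x' ≠ y' := by
    rintro rfl
    simp only [sub_self, norm_zero, Real.sqrt_zero, mul_zero, ne_eq, OfNat.ofNat_ne_zero,
      not_false_eq_true, zero_pow, Finset.sum_const_zero] at hpos'
    linarith
  have hgain := hf.modulus_le_of_doubled_isMax hM₀ hM hMn o hxy hs₀ hN hε.le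
    fun z hz => hmax z (le_trans hz hs)
  have hm : 0 < √‖x' - y'‖ := Real.sqrt_pos.2 (norm_pos_iff.2 (sub_ne_zero.2 hxy))
  have hNm : N * √‖x' - y'‖ ≤ 2 * Fintype.card ι * M ^ 2 := by linarith [hosc x' y' s hs]
  calc N ^ 4 = 3 * (N / √‖x' - y'‖ ^ 3 / 3) * (N * √‖x' - y'‖) ^ 3 := by
        field_simp
    _ ≤ _ := by gcongr

theorem IsConvexFlow.spaceHessian_eq_of_small (hf : IsConvexFlow ι Θ f) (hM₀ : 0 ≤ M)
    (hM : HessianLE f M) (hMn : 15 * Fintype.card ι * M ^ 2 ≤ 1) (ht : t < 0) (x y : E) :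
    spaceHessian f (x, t) = spaceHessian f (y, t) := by
  obtain ⟨o, -⟩ := hf.equation (x, t) ht
  suffices hosc : ∑ a, (hessianEntry f o a (x, t) - hessianEntry f o a (y, t)) ^ 2 ≤ 0 by
    refine LinearMap.BilinForm.ext_basis o.toBasis fun i j => ?_
    have hentry := (Finset.sum_eq_zero_iff_of_nonneg fun a _ => sq_nonneg _).1
      (hosc.antisymm (by positivity)) (i, j) (Finset.mem_univ _)
    simpa [spaceHessian_apply hf.smooth (p := (x, t)) ht,
      spaceHessian_apply hf.smooth (p := (y, t)) ht, hessianEntry, sub_eq_zero] using hentry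
  by_contra! hosc
  set q := ∑ a, (hessianEntry f o a (x, t) - hessianEntry f o a (y, t)) ^ 2 with hq
  obtain ⟨N, hN, hNq⟩ : ∃ N > 0, N * √‖x - y‖ < q := by
    refine ⟨q / (√‖x - y‖ + 1), by positivity, ?_⟩
    rw [div_mul_eq_mul_div, div_lt_iff₀ (by positivity)]
    linarith
  have hsmall : ∀ᶠ ε in 𝓝[>] (0 : ℝ), 0 < doubled (hessianEntry f o) N ε ((x, y), t) := by
    have hcont : Continuous fun ε => doubled (hessianEntry f o) N ε ((x, y), t) := by
      simp only [doubled]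
      fun_prop
    refine (hcont.continuousAt.eventually (lt_mem_nhds ?_)).filter_mono nhdsWithin_le_nhds
    simpa [doubled, ← hq] using hNq
  have hlim : Tendsto (fun ε : ℝ => 3 * ((6 * Fintype.card ι + 1) * ε) *
      (2 * Fintype.card ι * M ^ 2) ^ 3) (𝓝[>] 0) (𝓝 0) :=
    ((by fun_prop : Continuous _).tendsto' 0 _ (by simp)).mono_left nhdsWithin_le_nhds
  refine (pow_pos hN 4).not_ge (ge_of_tendsto hlim ?_)
  filter_upwards [hsmall, self_mem_nhdsWithin] with ε hpos hε
  exact hf.pow_four_le_of_doubled_pos hM₀ hM hMn o ht hN.le hε hpos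

end Doubling

/-! ### Rigidity -/

section Rigidity

open LinearMap (BilinForm)

lemma eq_quadratic_of_deriv₂_eq {φ φ' : ℝ → ℝ} {a : ℝ} (hφ : ∀ s, HasDerivAt φ (φ' s) s)
    (hφ' : ∀ s, HasDerivAt φ' a s) (s : ℝ) : φ s = φ 0 + φ' 0 * s + a / 2 * s ^ 2 := by
  have hlinear (s : ℝ) : φ' s = φ' 0 + a * s := by
    have hd (s : ℝ) : HasDerivAt (fun s => φ' s - a * s) 0 s := by
      simpa using (hφ' s).fun_sub ((hasDerivAt_id s).const_mul a)
    have := is_const_of_deriv_eq_zero (fun s => (hd s).differentiableAt) (fun s => (hd s).deriv) s 0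
    simp only [mul_zero] at this
    linarith
  have hd (s : ℝ) : HasDerivAt (fun s => φ s - φ' 0 * s - a / 2 * s ^ 2) 0 s := by
    refine (((hφ s).fun_sub ((hasDerivAt_id s).const_mul (φ' 0))).fun_sub
      (((hasDerivAt_id s).fun_pow 2).const_mul (a / 2))).congr_deriv ?_
    simp only [id, hlinear s]
    push_cast
    ring
  have := is_const_of_deriv_eq_zero (fun s => (hd s).differentiableAt) (fun s => (hd s).deriv) s 0
  simp only [mul_zero, ne_eq, OfNat.ofNat_ne_zero, not_false_eq_true, zero_pow] at this
  linarith

section Smooth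

variable {E : Type*} [NormedAddCommGroup E] [NormedSpace ℝ E] {f : E × ℝ → ℝ}

lemma PastSmooth.eq_add_mul_of_timeDeriv_eq (hf : PastSmooth f) {x : E} {d : ℝ}
    (hd : ∀ r < 0, ∂ₜ f (x, r) = d) {s t : ℝ} (hs : s < 0) (ht : t < 0) :
    f (x, t) = f (x, s) + d * (t - s) := by
  have hderiv (r : ℝ) (hr : r < 0) : HasDerivAt (fun r => f (x, r) - d * r) 0 r := by
    simpa [hd r hr] using (hf.hasDerivAt_time x hr).fun_sub ((hasDerivAt_id r).const_mul d)
  have : f (x, t) - d * t = f (x, s) - d * s :=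
    isOpen_Iio.is_const_of_deriv_eq_zero isPreconnected_Iio
      (fun r hr => (hderiv r hr).differentiableAt.differentiableWithinAt)
      (fun r hr => (hderiv r hr).deriv) ht hs
  linarith

lemma PastSmooth.spaceDeriv_eq_zero (hf : PastSmooth f)
    (h : ∀ t < 0, ∀ x y, f (x, t) = f (y, t)) (v : E) : EqOn (∂ₓ v f) (fun _ => 0) (past E) := by
  rintro ⟨x, t⟩ ht
  have hline := hf.hasDerivAt_line x v ht 0
  simp only [fun s : ℝ => h t ht (x + s • v) x] at hline
  simpa using hline.unique (hasDerivAt_const 0 _)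

lemma PastSmooth.timeDeriv_spaceDeriv_eq_zero (hf : PastSmooth f)
    (h : ∀ t < 0, ∀ x y, ∂ₜ f (x, t) = ∂ₜ f (y, t)) (v : E) :
    EqOn (∂ₜ (∂ₓ v f)) (fun _ => 0) (past E) := fun _ hp =>
  (dirDeriv_comm hf _ _ hp).trans ((hf.dirDeriv _).spaceDeriv_eq_zero h v hp)

lemma PastSmooth.spaceDeriv_eq_of_timeDeriv_eq (hf : PastSmooth f)
    (h : ∀ t < 0, ∀ x y, ∂ₜ f (x, t) = ∂ₜ f (y, t)) (v x : E) {s t : ℝ} (hs : s < 0)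
    (ht : t < 0) : ∂ₓ v f (x, t) = ∂ₓ v f (x, s) := by
  simpa using (hf.dirDeriv (v, 0)).eq_add_mul_of_timeDeriv_eq
    (fun r hr => hf.timeDeriv_spaceDeriv_eq_zero h v (x := (x, r)) hr) hs ht

lemma PastSmooth.spaceHessian_eq_of_timeDeriv_eq (hf : PastSmooth f)
    (h : ∀ t < 0, ∀ x y, ∂ₜ f (x, t) = ∂ₜ f (y, t)) (x : E) {s t : ℝ} (hs : s < 0)
    (ht : t < 0) : spaceHessian f (x, t) = spaceHessian f (x, s) := by
  have hzero (v w : E) (r : ℝ) (hr : r < 0) : ∂ₜ (∂ₓ v (∂ₓ w f)) (x, r) = 0 := by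
    have hr' : (x, r) ∈ past E := hr
    rw [dirDeriv_comm (hf.dirDeriv _) _ _ hr',
      dirDeriv_congr (hf.timeDeriv_spaceDeriv_eq_zero h w) _ hr']
    simp [_root_.dirDeriv]
  ext v w
  rw [spaceHessian_apply hf (p := (x, t)) ht, spaceHessian_apply hf (p := (x, s)) hs]
  simpa using (hf.spaceDeriv₂ v w).eq_add_mul_of_timeDeriv_eq (hzero v w) hs ht

lemma PastSmooth.eq_quadratic (hf : PastSmooth f) {B : BilinForm ℝ E} {d : ℝ}
    (hB : ∀ p ∈ past E, spaceHessian f p = B) (hd : ∀ p ∈ past E, ∂ₜ f p = d) (x : E) {t : ℝ}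
    (ht : t < 0) :
    f (x, t) = 1 / 2 * B x x + ∂ₓ x f (0, -1) + (f (0, -1) + d) + d * t := by
  have hgrad : ∂ₓ x f (0, t) = ∂ₓ x f (0, -1) :=
    hf.spaceDeriv_eq_of_timeDeriv_eq
      (fun r hr y z => (hd (y, r) hr).trans (hd (z, r) hr).symm) x 0 neg_one_lt_zero ht
  have hspace := eq_quadratic_of_deriv₂_eq (hf.hasDerivAt_line 0 x ht) (a := B x x) (fun s => by
    rw [← hB (0 + s • x, t) ht, spaceHessian_apply hf (p := (0 + s • x, t)) ht]
    exact (hf.dirDeriv (x, 0)).hasDerivAt_line 0 x ht s) 1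
  have htime : f (0, t) = f (0, -1) + d * (t - -1) :=
    hf.eq_add_mul_of_timeDeriv_eq (fun r hr => hd (0, r) hr) neg_one_lt_zero ht
  simp only [zero_smul, one_smul, add_zero, zero_add] at hspace
  linarith

end Smooth

variable {E ι : Type*} [NormedAddCommGroup E] [InnerProductSpace ℝ E] [Fintype ι]
  {f : E × ℝ → ℝ} {p q : E × ℝ} {M Θ : ℝ}

lemma IsConvexFlow.timeDeriv_le_of_spaceHessian_eq (hf : IsConvexFlow ι Θ f) (hp : p ∈ past E)
    (hq : q ∈ past E) (hpq : spaceHessian f p = spaceHessian f q) : ∂ₜ f q ≤ ∂ₜ f p := by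
  obtain ⟨b, hb, hpde⟩ := hf.equation p hp
  obtain ⟨b', hb', hpde'⟩ := hf.equation q hq
  have heig (e : OrthonormalBasis ι ℝ E) (i : ι) : 0 ≤ spaceHessian f q (e i) (e i) := by
    rw [spaceHessian_apply hf.smooth hq]
    exact hf.spaceDeriv₂_nonneg hq _
  rw [hpq] at hb hpde
  have := sum_apply_eigenvalues_le hb hb' (φ := Real.arctan) (φ' := fun s => 1 / (1 + s ^ 2))
    (K := 0) fun i j => by
      simpa using (arctan_tangent_bounds ⟨heig b i, le_max_left _ _⟩
        ⟨heig b' j, le_max_right _ _⟩).1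
  simp only [sub_self, mul_zero, Finset.sum_const_zero, zero_mul, add_zero] at this
  linarith

lemma IsConvexFlow.timeDeriv_eq_of_spaceHessian_eq (hf : IsConvexFlow ι Θ f) (hp : p ∈ past E)
    (hq : q ∈ past E) (hpq : spaceHessian f p = spaceHessian f q) : ∂ₜ f p = ∂ₜ f q :=
  (hf.timeDeriv_le_of_spaceHessian_eq hq hp hpq.symm).antisymm
    (hf.timeDeriv_le_of_spaceHessian_eq hp hq hpq)

lemma IsConvexFlow.eq_quadratic_of_small_hessian (hf : IsConvexFlow ι Θ f) (hM₀ : 0 ≤ M)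
    (hM : HessianLE f M) (hMn : 15 * Fintype.card ι * M ^ 2 ≤ 1) (x : E) {t : ℝ} (ht : t < 0) :
    f (x, t) = 1 / 2 * spaceHessian f (0, -1) x x + ∂ₓ x f (0, -1) +
      (f (0, -1) + ∂ₜ f (0, -1)) + ∂ₜ f (0, -1) * t := by
  have h₁ : ((0, -1) : E × ℝ) ∈ past E := neg_one_lt_zero (R := ℝ)
  have hspace (r : ℝ) (hr : r < 0) (y z : E) := hf.spaceHessian_eq_of_small hM₀ hM hMn hr y z
  have htime (r : ℝ) (hr : r < 0) (y z : E) : ∂ₜ f (y, r) = ∂ₜ f (z, r) :=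
    hf.timeDeriv_eq_of_spaceHessian_eq (p := (y, r)) (q := (z, r)) hr hr (hspace r hr y z)
  have hconst (q : E × ℝ) (hq : q ∈ past E) : spaceHessian f q = spaceHessian f (0, -1) :=
    (hspace q.2 hq q.1 0).trans
      (hf.smooth.spaceHessian_eq_of_timeDeriv_eq htime 0 neg_one_lt_zero hq)
  exact hf.smooth.eq_quadratic hconst
    (fun q hq => hf.timeDeriv_eq_of_spaceHessian_eq hq h₁ (hconst q hq)) x ht

end Rigidity

/-! ### The Liouville theorem -/

section Liouville

variable {E ι : Type*} [NormedAddCommGroup E] [InnerProductSpace ℝ E] [Fintype ι]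
  {f : E × ℝ → ℝ} {Θ C c R T : ℝ}

lemma IsConvexFlow.abs_timeDeriv_le (hf : IsConvexFlow ι Θ f) {p : E × ℝ} (hp : p ∈ past E) :
    |∂ₜ f p| ≤ Fintype.card ι * (Real.pi / 2) + |Θ| := by
  obtain ⟨b, -, hpde⟩ := hf.equation p hp
  calc |∂ₜ f p| ≤ |∑ i, Real.arctan (spaceHessian f p (b i) (b i))| + |Θ| := hpde ▸ abs_sub _ _
    _ ≤ ∑ i, |Real.arctan (spaceHessian f p (b i) (b i))| + |Θ| := by
      gcongr
      exact Finset.abs_sum_le_sum_abs _ _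
    _ ≤ ∑ _i : ι, Real.pi / 2 + |Θ| := by
      gcongr with i
      exact abs_le.2 ⟨(Real.neg_pi_div_two_lt_arctan _).le, (Real.arctan_lt_pi_div_two _).le⟩
    _ = Fintype.card ι * (Real.pi / 2) + |Θ| := by simp

lemma IsConvexFlow.exists_growth_on_past (hf : IsConvexFlow ι Θ f)
    (hgrowth : ∀ t ≤ T, ∀ x, |f (x, t)| ≤ c * ‖x‖ ^ 2 + R) :
    ∃ R', ∀ q ∈ past E, |f q| ≤ c * ‖q.1‖ ^ 2 + R' := by
  set K := Fintype.card ι * (Real.pi / 2) + |Θ|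
  have hK : 0 ≤ K := by positivity
  obtain ⟨s, hsT, hs⟩ : ∃ s ≤ T, s < 0 :=
    ⟨min T (-1), min_le_left _ _, (min_le_right _ _).trans_lt neg_one_lt_zero⟩
  refine ⟨R + K * -s, ?_⟩
  rintro ⟨x, t⟩ ht
  rcases le_total t s with hts | hst
  · linarith [hgrowth t (hts.trans hsT) x, mul_nonneg hK (neg_nonneg.2 hs.le)]
  · have hlip : |f (x, t) - f (x, s)| ≤ K * |t - s| :=
      (convex_Iio (0 : ℝ)).norm_image_sub_le_of_norm_hasDerivWithin_le
        (fun r hr => (hf.smooth.hasDerivAt_time x hr).hasDerivWithinAt)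
        (fun r hr => hf.abs_timeDeriv_le (p := (x, r)) hr) hs ht
    calc |f (x, t)| ≤ |f (x, s)| + |f (x, t) - f (x, s)| := by
          simpa using abs_add_le (f (x, s)) (f (x, t) - f (x, s))
      _ ≤ c * ‖x‖ ^ 2 + R + K * (t - s) := by
          rw [abs_of_nonneg (sub_nonneg.2 hst)] at hlip
          exact add_le_add (hgrowth s hsT x) hlip
      _ ≤ c * ‖x‖ ^ 2 + (R + K * -s) := by
          rw [add_assoc]
          gcongr
          have : t < 0 := ht
          linarith

lemma mul_sq_lt_one_of_mul_lt_one {N : ℕ} (hc₀ : 0 ≤ c) (hc : 24 * N * c < 1) :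
    N * (15 * N + 1) * (36 * c ^ 2) < 1 := by
  have hN : (N : ℝ) ≤ N ^ 2 := mod_cast Nat.le_self_pow two_ne_zero N
  calc N * (15 * N + 1) * (36 * c ^ 2) = (15 * (N : ℝ) ^ 2 + N) * (36 * c ^ 2) := by ring
    _ ≤ (15 * (N : ℝ) ^ 2 + N ^ 2) * (36 * c ^ 2) := by gcongr
    _ = (24 * N * c) ^ 2 := by ring
    _ < 1 := pow_lt_one₀ (by positivity) hc two_ne_zero

theorem IsConvexFlow.eq_quadratic_of_growth (hf : IsConvexFlow ι Θ f) (hC : HessianLE f C)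
    (hc : 24 * Fintype.card ι * c < 1)
    (hgrowth : ∀ t ≤ T, ∀ x, |f (x, t)| ≤ c * ‖x‖ ^ 2 + R) (x : E) {t : ℝ} (ht : t < 0) :
    f (x, t) = 1 / 2 * spaceHessian f (0, -1) x x + ∂ₓ x f (0, -1) +
      (f (0, -1) + ∂ₜ f (0, -1)) + ∂ₜ f (0, -1) * t := by
  wlog hc₀ : 0 ≤ c generalizing c
  · refine this (c := 0) (by simp) (fun s hs y => (hgrowth s hs y).trans ?_) le_rfl
    gcongr
    exact (not_le.1 hc₀).le
  obtain ⟨R', hR'⟩ := hf.exists_growth_on_past hgrowth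
  obtain ⟨M, hM₀, hMn, hM⟩ := hf.exists_small_hessianLE hC (by positivity)
    (mul_sq_lt_one_of_mul_lt_one hc₀ hc)
    fun q hq e he => sq_spaceDeriv_le_of_growth hf.smooth hf.convexOn hc₀ hR' hq he
  exact hf.eq_quadratic_of_small_hessian hM₀ hM hMn x ht

end Liouville

section Coordinates

open Matrix

variable {n : ℕ} {f : EuclideanSpace ℝ (Fin n) × ℝ → ℝ} {Θ C t : ℝ}

lemma fderiv_slice {E : Type*} [NormedAddCommGroup E] [NormedSpace ℝ E] {f : E × ℝ → ℝ}
    (hf : PastSmooth f) (ht : t < 0) (x v : E) :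
    fderiv ℝ (fun y => f (y, t)) x v = ∂ₓ v f (x, t) := by
  have hslice : HasFDerivAt (fun y => f (y, t)) ((fderiv ℝ f (x, t)).comp (.inl ℝ E ℝ)) x :=
    (hf.differentiableAt (p := (x, t)) ht).hasFDerivAt.comp x (hasFDerivAt_prodMk_left x t)
  rw [hslice.fderiv]
  rfl

lemma hess_slice_eq (hf : PastSmooth f) (ht : t < 0) (x : EuclideanSpace ℝ (Fin n))
    (i j : Fin n) : hess (fun y => f (y, t)) x i j =
      spaceHessian f (x, t) (EuclideanSpace.single i 1) (EuclideanSpace.single j 1) := by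
  have hsmooth : ContDiffAt ℝ ∞ (fun y => f (y, t)) x :=
    (hf.contDiffAt (p := (x, t)) ht).comp x (contDiffAt_id.prodMk contDiffAt_const)
  have hdiff : DifferentiableAt ℝ (fderiv ℝ fun y => f (y, t)) x :=
    (hsmooth.fderiv_right (m := ∞) (by simp)).differentiableAt (by simp)
  rw [hess, iteratedFDeriv_two_apply, spaceHessian_apply hf (p := (x, t)) ht,
    ← fderiv_slice (hf.dirDeriv _) ht]
  simp only [← fderiv_slice hf ht]
  rw [(hdiff.hasFDerivAt.clm_apply (hasFDerivAt_const _ x)).fderiv]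
  simp

lemma spaceHessian_eq_dotProduct (hf : PastSmooth f) (ht : t < 0)
    (x v w : EuclideanSpace ℝ (Fin n)) :
    spaceHessian f (x, t) v w = v.ofLp ⬝ᵥ hess (fun y => f (y, t)) x *ᵥ w.ofLp := by
  have hmatrix : LinearMap.BilinForm.toMatrix (EuclideanSpace.basisFun (Fin n) ℝ).toBasis
      (spaceHessian f (x, t)) = hess (fun y => f (y, t)) x := by
    ext i j
    simp [hess_slice_eq hf ht]
  rw [LinearMap.BilinForm.apply_eq_dotProduct_toMatrix_mulVec
    (EuclideanSpace.basisFun (Fin n) ℝ).toBasis, hmatrix]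
  rfl

lemma spaceHessian_eigenvectorBasis (hf : PastSmooth f) (ht : t < 0)
    {x : EuclideanSpace ℝ (Fin n)} (hH : (hess (fun y => f (y, t)) x).IsHermitian) (i : Fin n)
    (w : EuclideanSpace ℝ (Fin n)) :
    spaceHessian f (x, t) (hH.eigenvectorBasis i) w =
      hH.eigenvalues i * inner ℝ (hH.eigenvectorBasis i) w := by
  have hsymm : spaceHessian f (x, t) (hH.eigenvectorBasis i) w =
      spaceHessian f (x, t) w (hH.eigenvectorBasis i) :=
    (isSymm_spaceHessian hf (p := (x, t)) ht).eq _ _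
  rw [hsymm, spaceHessian_eq_dotProduct hf ht,
    hH.mulVec_eigenvectorBasis, dotProduct_smul, EuclideanSpace.inner_eq_star_dotProduct,
    star_trivial, smul_eq_mul]

lemma isConvexFlow_of_hess (hf : PastSmooth f)
    (hconv : ∀ t < 0, ConvexOn ℝ univ fun y => f (y, t))
    (hsym : ∀ x, ∀ t < 0, (hess (fun y => f (y, t)) x).IsHermitian)
    (hPDE : ∀ x t (ht : t < 0),
      deriv (fun s => f (x, s)) t = ∑ i, Real.arctan ((hsym x t ht).eigenvalues i) - Θ) :
    IsConvexFlow (Fin n) Θ f := by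
  refine ⟨hf, hconv, ?_⟩
  rintro ⟨x, t⟩ ht
  have hdiag (i : Fin n) : spaceHessian f (x, t) ((hsym x t ht).eigenvectorBasis i)
      ((hsym x t ht).eigenvectorBasis i) = (hsym x t ht).eigenvalues i := by
    rw [spaceHessian_eigenvectorBasis hf ht, real_inner_self_eq_norm_sq,
      OrthonormalBasis.norm_eq_one, one_pow, mul_one]
  refine ⟨(hsym x t ht).eigenvectorBasis, fun i w => ?_, ?_⟩
  · rw [hdiag, spaceHessian_eigenvectorBasis hf ht]
  · simp only [hdiag, ← hPDE x t ht, (hf.hasDerivAt_time x ht).deriv]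

lemma hessianLE_of_posSemidef (hf : PastSmooth f)
    (hhess : ∀ x, ∀ t < 0,
      (C • (1 : Matrix (Fin n) (Fin n) ℝ) - hess (fun y => f (y, t)) x).PosSemidef) :
    HessianLE f C := by
  rintro ⟨x, t⟩ ht v hv
  have hnonneg := (hhess x t ht).dotProduct_mulVec_nonneg v.ofLp
  have hunit : v.ofLp ⬝ᵥ v.ofLp = 1 := by
    simpa [hv] using (EuclideanSpace.inner_eq_star_dotProduct v v).symm
  rw [star_trivial, sub_mulVec, dotProduct_sub, smul_mulVec, one_mulVec, dotProduct_smul, hunit,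
    smul_eq_mul, mul_one, ← spaceHessian_eq_dotProduct hf ht,
    spaceHessian_apply hf (p := (x, t)) ht] at hnonneg
  exact sub_nonneg.1 hnonneg

lemma spaceHessian_eq_sum (hf : PastSmooth f) (ht : t < 0) (x v : EuclideanSpace ℝ (Fin n)) :
    spaceHessian f (x, t) v v = ∑ i, ∑ j, hess (fun y => f (y, t)) x i j * v i * v j := by
  simp only [spaceHessian_eq_dotProduct hf ht, dotProduct, mulVec, Finset.mul_sum]
  exact Finset.sum_congr rfl fun i _ => Finset.sum_congr rfl fun j _ => by ring

lemma spaceDeriv_eq_sum (f : EuclideanSpace ℝ (Fin n) × ℝ → ℝ)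
    (p : EuclideanSpace ℝ (Fin n) × ℝ) (v : EuclideanSpace ℝ (Fin n)) :
    ∂ₓ v f p = ∑ i, ∂ₓ (EuclideanSpace.single i 1) f p * v i := by
  have := sum_inner_mul_apply (EuclideanSpace.basisFun (Fin n) ℝ)
    ((fderiv ℝ f p).comp (.inl ℝ _ ℝ)).toLinearMap v
  simpa [dirDeriv, EuclideanSpace.inner_single_left, mul_comm] using this.symm

end Coordinates

lemma mul_lt_one_of_lt_inv_sq {n : ℕ} {c : ℝ} (hc : c < 1 / (6 * √n + 2) ^ 2) :
    24 * n * c < 1 := by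
  rw [lt_div_iff₀ (by positivity)] at hc
  have hsqrt : 24 * (n : ℝ) ≤ (6 * √n + 2) ^ 2 := by
    nlinarith [Real.sq_sqrt n.cast_nonneg, Real.sqrt_nonneg n]
  rcases le_total c 0 with hc₀ | hc₀ <;> nlinarith [n.cast_nonneg (α := ℝ)]

theorem stmt19_general (n : ℕ) (Θ₀ : ℝ) (u : EuclideanSpace ℝ (Fin n) → ℝ → ℝ)
    (hsmooth : ContDiffOn ℝ ∞ (fun p : EuclideanSpace ℝ (Fin n) × ℝ => u p.1 p.2)
      (univ ×ˢ Iic 0))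
    (hconv : ∀ t < 0, ConvexOn ℝ univ fun y => u y t)
    (hsym : ∀ x, ∀ t < 0, (hess (fun y => u y t) x).IsHermitian)
    (hPDE : ∀ x t (ht : t < 0),
      deriv (u x) t = ∑ i, Real.arctan ((hsym x t ht).eigenvalues i) - Θ₀)
    (C : ℝ)
    (hhess : ∀ x, ∀ t < 0,
      (C • (1 : Matrix (Fin n) (Fin n) ℝ) - hess (fun y => u y t) x).PosSemidef)
    (R c T : ℝ) (hc : 24 * n * c < 1) (hgrowth : ∀ t ≤ T, ∀ x, |u x t| ≤ c * ‖x‖ ^ 2 + R) :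
    ∃ (A : Matrix (Fin n) (Fin n) ℝ) (bvec : Fin n → ℝ) (c₀ d : ℝ), A.IsSymm ∧
      ∀ x : EuclideanSpace ℝ (Fin n), ∀ t ≤ 0,
        u x t = 1 / 2 * (∑ i, ∑ j, A i j * x i * x j) + (∑ i, bvec i * x i) + c₀ + d * t := by
  set f : EuclideanSpace ℝ (Fin n) × ℝ → ℝ := fun p => u p.1 p.2
  have hf : PastSmooth f := hsmooth.mono fun p hp => ⟨mem_univ _, mem_Iic.2 (le_of_lt hp)⟩
  have hflow : IsConvexFlow (Fin n) Θ₀ f := isConvexFlow_of_hess hf hconv hsym hPDE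
  refine ⟨hess (fun y => u y (-1)) 0, fun i => ∂ₓ (EuclideanSpace.single i 1) f (0, -1),
    f (0, -1) + ∂ₜ f (0, -1), ∂ₜ f (0, -1),
    Matrix.isHermitian_iff_isSymm.1 (hsym 0 (-1) neg_one_lt_zero), fun x t ht => ?_⟩
  rw [← spaceDeriv_eq_sum f, ← spaceHessian_eq_sum hf neg_one_lt_zero]
  have hpast : EqOn (u x) _ (Iio 0) := fun s hs =>
    hflow.eq_quadratic_of_growth (hessianLE_of_posSemidef hf hhess) (by simpa using hc) hgrowth x hs
  have hcont : ContinuousOn (u x) (Iic 0) :=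
    hsmooth.continuousOn.comp (f := fun s => (x, s)) (by fun_prop) fun s hs => ⟨mem_univ _, hs⟩
  exact hpast.of_subset_closure hcont (by fun_prop) Iio_subset_Iic_self (closure_Iio (0 : ℝ)).ge ht

theorem stmt19 (n : ℕ) (hn : 1 ≤ n) (Θ₀ : ℝ)
    (u : EuclideanSpace ℝ (Fin n) → ℝ → ℝ)
    (hsmooth : ContDiffOn ℝ (⊤ : ℕ∞) (fun p : EuclideanSpace ℝ (Fin n) × ℝ => u p.1 p.2)
      (Set.univ ×ˢ Set.Iic (0 : ℝ)))
    (hconv : ∀ t ≤ (0 : ℝ), ConvexOn ℝ Set.univ (fun y => u y t))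
    (hsym : ∀ x : EuclideanSpace ℝ (Fin n), ∀ t ≤ (0 : ℝ),
      (hess (fun y => u y t) x).IsHermitian)
    (hPDE : ∀ x : EuclideanSpace ℝ (Fin n), ∀ t (ht : t ≤ (0 : ℝ)),
      deriv (u x) t = (∑ i, Real.arctan ((hsym x t ht).eigenvalues i)) - Θ₀)
    (C : ℝ)
    (hhess : ∀ x : EuclideanSpace ℝ (Fin n), ∀ t ≤ (0 : ℝ),
      (C • (1 : Matrix (Fin n) (Fin n) ℝ) - hess (fun y => u y t) x).PosSemidef)
    (R₀ c : ℝ) (hR₀ : 0 ≤ R₀) (hc : c < 1 / (6 * Real.sqrt n + 2) ^ 2)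
    (hgrowth : ∃ T ≤ (0 : ℝ), ∀ t ≤ T, ∀ x : EuclideanSpace ℝ (Fin n),
      |u x t| ≤ c * (‖x‖ ^ 2 + R₀)) :
    ∃ (A : Matrix (Fin n) (Fin n) ℝ) (bvec : Fin n → ℝ) (c₀ d : ℝ),
      A.IsSymm ∧
      ∀ x : EuclideanSpace ℝ (Fin n), ∀ t ≤ (0 : ℝ),
        u x t = (1 / 2) * (∑ i, ∑ j, A i j * x i * x j)
          + (∑ i, bvec i * x i) + c₀ + d * t := by
  obtain ⟨T, -, hT⟩ := hgrowth
  exact stmt19_general n Θ₀ u hsmooth (fun t ht => hconv t ht.le) (fun x t ht => hsym x t ht.le)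
    (fun x t ht => hPDE x t ht.le) C (fun x t ht => hhess x t ht.le) (c * R₀) c T
    (mul_lt_one_of_lt_inv_sq hc) fun t ht x => by linarith [hT t ht x]
end
end
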